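/- arXiv:1806.00856 — 2 statements merged into one kernel-verified Lean document; each statement's English description precedes it below -/
import Mathlib

section
/- Let k be an algebraically closed field, d ≥ 2 an integer, and φ₀, φ₁, φ₂ ∈ R = k[x,y,z] homogeneous polynomials of degree d−1 generating the ideal I = (φ₀, φ₁, φ₂). Assume the Krull dimension of R/I is at most 1. Then dim_k (R/I)_m = (d−1)² − (d−2) for all sufficiently large m (i.e., d−2 = (d−1)² − τ(Z)) if and only if there exist syzygies u, v ∈ N, with u homogeneous of degree 1 and v homogeneous of degree d−2, which are linearly independent over R and satisfy N = R·u + R·v; that is, if and only if the sheaf of relations E is free: E ≅ O_{P²}(−1) ⊕ O_{P²}(2−d). -/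
open MvPolynomial Filter

/-!
Write `e = d - 1`. As `dim R/I ≤ 1`, the `φᵢ` have no common factor. Let `u` be a nonzero
homogeneous syzygy of least degree `r`, and put `q = e - r`, which is nonnegative because of the
Koszul syzygies. The coordinates of `u` have no common factor either, so for every syzygy `w` the
vector `u × w`, being orthogonal to `u` and `w` as `φ` is, equals `f φ` for some `f`, and
`u × w = 0` only if `w` is a multiple of `u`. Hence `w ↦ f` identifies `N / R u` with an ideal `J`
(that of the zero scheme of `u` as a section of `E(r)`), and counting dimensions gives, in large
degrees, the equation `HF(R/I) + HF(R/J) + r q = e²`.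

Moreover `J = R` if and only if `u × v = φ` for some `v`, which by Hilbert–Burch means that `u` and
`v` are a basis of `N`. In that case `HF(R/J) = 0` and the equation gives one implication.
Conversely, if `HF(R/I) = e² - (e - 1)` in large degrees, then `HF(R/J) = -(r - 1) (q - 1)` there.
If `r, q ≥ 1`, this vanishes; as `J` is saturated, `HF(R/J)` is monotone, so `J = R` and one of `r`,
`q` is `1`. If `r = 0`, then `u` is constant and `J = R`. If `q = 0`, then `J` has no nonzero
elements of degree less than `r`, so that `HF(R/J)` reaches `r (r + 1) / 2`, which is more than the
value `r - 1` it should have in large degrees.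
-/

namespace SyzygyFreeness

open scoped Matrix nonZeroDivisors

section Primitive

variable {ι A : Type*} [CommRing A]

/-- A vector is primitive if its coordinates have no common divisor besides the units. -/
def IsPrimitive (a : ι → A) : Prop :=
  ∀ p, (∀ i, p ∣ a i) → IsUnit p

lemma IsPrimitive.ne_zero [Nontrivial A] {a : ι → A} (ha : IsPrimitive a) : a ≠ 0 := by
  rintro rfl
  exact not_isUnit_zero (ha 0 fun _ => dvd_rfl)

variable [IsDomain A] [UniqueFactorizationMonoid A]

lemma IsPrimitive.exists_eq_smul [Finite ι] {a b : ι → A} (ha : IsPrimitive a)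
    (h : ∀ i j, a i * b j = a j * b i) : ∃ c : A, b = c • a := by
  classical
  have := Fintype.ofFinite ι
  let _ := Classical.choice (inferInstance : Nonempty (NormalizedGCDMonoid A))
  have hgcd : IsUnit (Finset.univ.gcd a) := ha _ fun i => Finset.gcd_dvd (Finset.mem_univ i)
  have hdvd (j : ι) : a j ∣ b j := by
    have h_gcd_mul : a j ∣ Finset.univ.gcd fun i => a i * b j :=
      Finset.dvd_gcd fun i _ => h i j ▸ dvd_mul_right _ _
    exact hgcd.dvd_mul_left.1
      (h_gcd_mul.trans (Finset.gcd_mul_right' (s := Finset.univ) (f := a) (b j)).dvd)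
  obtain ⟨j, hj⟩ := Function.ne_iff.1 ha.ne_zero
  obtain ⟨c, hc⟩ := hdvd j
  refine ⟨c, funext fun i => mul_left_cancel₀ hj ?_⟩
  rw [Pi.smul_apply, smul_eq_mul, h j i, hc]
  ring

lemma IsPrimitive.exists_eq_smul_of_cross_eq_zero {a b : Fin 3 → A} (ha : IsPrimitive a)
    (h : a ⨯₃ b = 0) : ∃ c : A, b = c • a := by
  rw [cross_apply] at h
  have h0 := congrFun h 0
  have h1 := congrFun h 1
  have h2 := congrFun h 2
  simp only [Matrix.cons_val, Pi.zero_apply] at h0 h1 h2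
  refine ha.exists_eq_smul fun i j => ?_
  fin_cases i <;> fin_cases j <;> grind

-- The triple product expansion gives `(u × w) × φ = 0`.
lemma IsPrimitive.exists_cross_eq_smul {φ u w : Fin 3 → A} (hφ : IsPrimitive φ)
    (hu : u ⬝ᵥ φ = 0) (hw : w ⬝ᵥ φ = 0) : ∃ f : A, u ⨯₃ w = f • φ :=
  hφ.exists_eq_smul_of_cross_eq_zero <| by
    rw [cross_cross_eq_smul_sub_smul', dotProduct_comm φ w, hw, hu, zero_smul, zero_smul, sub_zero]

end Primitive

section Height

variable {k : Type*} [Field k]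

theorem height_eq_of_isMaximal (n : ℕ) (m : Ideal (MvPolynomial (Fin n) k)) [m.IsMaximal] :
    m.height = n := by
  induction n with
  | zero =>
    have h : m.height ≤ (0 : WithBot ℕ∞) := by
      simpa using m.height_le_ringKrullDim_of_ne_top Ideal.IsPrime.ne_top'
    simpa using h
  | succ n ih =>
    let e := (finSuccEquiv k n).symm.toRingEquiv
    let P := m.comap e
    have : P.IsMaximal := Ideal.comap_isMaximal_of_equiv e
    have : (P.comap Polynomial.C).IsMaximal := Polynomial.isMaximal_comap_C_of_isJacobsonRing P
    have : P.LiesOver (P.comap Polynomial.C) := ⟨rfl⟩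
    rw [← e.height_comap, Polynomial.height_eq_height_add_one (P.comap Polynomial.C) P, ih]
    rfl

theorem isPrimitive_of_ringKrullDim_quotient_lt {ι : Type*} {n : ℕ}
    {φ : ι → MvPolynomial (Fin n) k}
    (hdim : ringKrullDim (MvPolynomial (Fin n) k ⧸ Ideal.span (Set.range φ)) + 1 < n) :
    IsPrimitive φ := by
  intro p hp
  by_contra hunit
  obtain ⟨m, hm, hpm⟩ := exists_max_ideal_of_mem_nonunits hunit
  have hle : Ideal.span (Set.range φ) ≤ Ideal.span {p} :=
    Ideal.span_le.2 <| Set.range_subset_iff.2 fun i => Ideal.mem_span_singleton.2 (hp i)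
  refine hdim.not_ge ?_
  calc (n : WithBot ℕ∞) = m.height := by rw [height_eq_of_isMaximal n m]; rfl
    _ ≤ ringKrullDim (MvPolynomial (Fin n) k ⧸ Ideal.span {p}) + 1 :=
      Ideal.height_le_ringKrullDim_quotient_add_one hpm
    _ ≤ _ := by
      gcongr
      exact ringKrullDim_le_of_surjective _ (Ideal.Quotient.factor_surjective hle)

end Height

section PolynomialCoefficients

lemma linearIndependent_map_polynomial {k A ι : Type*} [Field k] [CommRing A] [Algebra k A]
    [Fintype ι] {b : ι → A} (hb : LinearIndependent k b) {g : ι → Polynomial k}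
    (hg : ∑ j, (g j).map (algebraMap k A) * Polynomial.C (b j) = 0) : g = 0 := by
  funext j
  ext l
  refine Fintype.linearIndependent_iff.1 hb (fun j => (g j).coeff l) ?_ j
  simpa [Polynomial.finsetSum_coeff, Algebra.smul_def] using congrArg (Polynomial.coeff · l) hg

theorem finrank_le_of_coeff_mul_mem {k A : Type*} [Field k] [CommRing A] [Algebra k A]
    {F : Polynomial A} (hF : F ∈ (Polynomial A)⁰) {p q : Submodule k A} [FiniteDimensional k p]
    [FiniteDimensional k q] (h : ∀ i, ∀ a ∈ p, F.coeff i * a ∈ q) :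
    Module.finrank k p ≤ Module.finrank k q := by
  let b := Module.finBasis k p
  let c := Module.finBasis k q
  let M : Matrix (Fin (Module.finrank k q)) (Fin (Module.finrank k p)) (Polynomial k) :=
    fun i j => ∑ l ∈ F.support, Polynomial.monomial l (c.repr ⟨_, h l _ (b j).2⟩ i)
  have hM (j) : ∑ i, (M i j).map (algebraMap k A) * Polynomial.C (c i : A) =
      F * Polynomial.C (b j : A) := by
    ext l
    have hrepr := congrArg Subtype.val (c.sum_repr ⟨_, h l _ (b j).2⟩)
    by_cases hl : F.coeff l = 0
    · simp [M, hl, Polynomial.finsetSum_coeff, Polynomial.coeff_monomial]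
    · simp only [Submodule.coe_sum, Submodule.coe_smul, Algebra.smul_def] at hrepr
      simpa [M, hl, Polynomial.finsetSum_coeff, Polynomial.coeff_monomial] using hrepr
  have hinj : Function.Injective M.mulVecLin := by
    rw [← LinearMap.ker_eq_bot, LinearMap.ker_eq_bot']
    intro g hg
    refine linearIndependent_map_polynomial (b := fun j => (b j : A))
      (b.linearIndependent.map' p.subtype p.ker_subtype) (hF.1 _ ?_)
    calc F * ∑ j, (g j).map (algebraMap k A) * Polynomial.C (b j : A)
        = ∑ j, (g j).map (algebraMap k A) * (F * Polynomial.C (b j : A)) := by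
          rw [Finset.mul_sum]; exact Finset.sum_congr rfl fun j _ => by ring
      _ = ∑ i, (M.mulVec g i).map (algebraMap k A) * Polynomial.C (c i : A) := by
          simp_rw [← hM, Matrix.mulVec, dotProduct, Polynomial.map_sum, Finset.sum_mul,
            Finset.mul_sum]
          rw [Finset.sum_comm]
          refine Finset.sum_congr rfl fun i _ => Finset.sum_congr rfl fun j _ => ?_
          rw [Polynomial.map_mul]
          ring
      _ = 0 := by
        rw [Matrix.mulVecLin_apply] at hg
        simp [hg]
  simpa using card_le_of_injective _ M.mulVecLin hinj

end PolynomialCoefficients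

section HilbertFunction

variable {k σ : Type*} [Field k]

/-- An ideal of `k[x₀, …, xₙ₋₁]` is saturated (with respect to the irrelevant ideal) if it contains
every polynomial all of whose products with the variables it contains. -/
def IsSaturated (J : Ideal (MvPolynomial σ k)) : Prop :=
  ∀ f, (∀ i, X i * f ∈ J) → f ∈ J

/-- The Hilbert function of the quotient by `J`, for which `J` need not be homogeneous: its value
at `m` is the dimension of the image of the forms of degree `m`. -/
noncomputable def hilbertFunction (J : Ideal (MvPolynomial σ k)) (m : ℕ) : ℕ :=
  Module.finrank k ((homogeneousSubmodule σ k m).map (Ideal.Quotient.mkₐ k J).toLinearMap)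

instance [Finite σ] (m : ℕ) : FiniteDimensional k (homogeneousSubmodule σ k m) :=
  Module.Finite.iff_fg.2 (homogeneousSubmodule_fg σ k m)

lemma finrank_homogeneousSubmodule [Fintype σ] (m : ℕ) :
    Module.finrank k (homogeneousSubmodule σ k m) = (Fintype.card σ + m - 1).choose m := by
  classical
  have hset : {d : σ →₀ ℕ | d.degree = m} =
      ((Finset.univ : Finset σ).finsuppAntidiag m : Set (σ →₀ ℕ)) := by
    ext d
    simp [Finset.mem_finsuppAntidiag, Finsupp.degree_eq_sum]
  rw [homogeneousSubmodule_eq_finsupp_supported,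
    (AddMonoidAlgebra.supportedEquivFinsupp (R := k) (S := k) _).finrank_eq, hset,
    Module.finrank_finsupp_self]
  simp only [Fintype.card_coe, SetLike.coe_sort_coe, Finset.card_finsuppAntidiag_nat_eq_choose,
    Finset.card_univ]

lemma two_mul_finrank_homogeneousSubmodule_fin_three (m : ℕ) :
    2 * Module.finrank k (homogeneousSubmodule (Fin 3) k m) = (m + 1) * (m + 2) := by
  rw [finrank_homogeneousSubmodule, Fintype.card_fin, show 3 + m - 1 = m + 2 by omega,
    Nat.choose_symm_add, mul_comm, ← Nat.add_one_mul_choose_eq (m + 1) 1]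
  simp
  ring

lemma finrank_map_add_finrank_inf_ker {M M' : Type*} [AddCommGroup M] [Module k M]
    [AddCommGroup M'] [Module k M'] (p : Submodule k M) [FiniteDimensional k p] (f : M →ₗ[k] M') :
    Module.finrank k (p.map f) + Module.finrank k (p ⊓ LinearMap.ker f : Submodule k M) =
      Module.finrank k p := by
  rw [← LinearMap.finrank_range_add_finrank_ker (f.domRestrict p), LinearMap.range_domRestrict,
    LinearMap.ker_domRestrict, ← Submodule.finrank_map_subtype_eq p, Submodule.map_comap_subtype]

lemma finrank_map_of_injective {M M' : Type*} [AddCommGroup M] [Module k M]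
    [AddCommGroup M'] [Module k M'] (p : Submodule k M) {f : M →ₗ[k] M'}
    (hf : Function.Injective f) : Module.finrank k (p.map f) = Module.finrank k p :=
  (Submodule.equivMapOfInjective f hf p).finrank_eq.symm

lemma hilbertFunction_add_finrank_inf [Finite σ] (J : Ideal (MvPolynomial σ k)) (m : ℕ) :
    hilbertFunction J m + Module.finrank k
        (homogeneousSubmodule σ k m ⊓ J.restrictScalars k : Submodule k (MvPolynomial σ k)) =
      Module.finrank k (homogeneousSubmodule σ k m) := by
  have hker : LinearMap.ker (Ideal.Quotient.mkₐ k J).toLinearMap = J.restrictScalars k := by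
    ext x
    simp [Ideal.Quotient.eq_zero_iff_mem]
  rw [← finrank_map_add_finrank_inf_ker (homogeneousSubmodule σ k m)
    (Ideal.Quotient.mkₐ k J).toLinearMap, hker]
  rfl

lemma hilbertFunction_top (m : ℕ) : hilbertFunction (⊤ : Ideal (MvPolynomial σ k)) m = 0 :=
  have : Subsingleton (MvPolynomial σ k ⧸ (⊤ : Ideal (MvPolynomial σ k))) :=
    Ideal.Quotient.subsingleton_iff.2 rfl
  Module.finrank_zero_of_subsingleton

lemma eq_top_of_hilbertFunction_zero_eq_zero [Finite σ] {J : Ideal (MvPolynomial σ k)}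
    (h : hilbertFunction J 0 = 0) : J = ⊤ := by
  rw [hilbertFunction, Submodule.finrank_eq_zero] at h
  have hone : (Ideal.Quotient.mkₐ k J).toLinearMap 1 ∈
      (homogeneousSubmodule σ k 0).map (Ideal.Quotient.mkₐ k J).toLinearMap :=
    Submodule.mem_map_of_mem (isHomogeneous_one σ k)
  rw [h, Submodule.mem_bot] at hone
  exact (Ideal.eq_top_iff_one J).2 (Ideal.Quotient.eq_zero_iff_mem.1 hone)

-- By McCoy's theorem the pencil `∑ xᵢ tⁱ` is a nonzerodivisor on `(R/J)[t]`; over an infinite field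
-- one would specialize it to a linear form, but the dimension count does not need that.
theorem IsSaturated.monotone_hilbertFunction {n : ℕ} {J : Ideal (MvPolynomial (Fin n) k)}
    (hJ : IsSaturated J) : Monotone (hilbertFunction J) := by
  let F : Polynomial (MvPolynomial (Fin n) k ⧸ J) :=
    ∑ i : Fin n, Polynomial.monomial i (Ideal.Quotient.mk J (X i))
  have hcoeff (i : Fin n) : F.coeff i = Ideal.Quotient.mk J (X i) := by
    simp [F, Polynomial.finsetSum_coeff, Polynomial.coeff_monomial, Fin.val_inj]
  have hF : F ∈ (Polynomial (MvPolynomial (Fin n) k ⧸ J))⁰ := by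
    refine Polynomial.mem_nonZeroDivisors_iff.2 fun a ha => ?_
    obtain ⟨f, rfl⟩ := Ideal.Quotient.mk_surjective a
    refine Ideal.Quotient.eq_zero_iff_mem.2 (hJ f fun i => Ideal.Quotient.eq_zero_iff_mem.1 ?_)
    simpa [hcoeff, mul_comm] using congrArg (Polynomial.coeff · i) ha
  refine monotone_nat_of_le_succ fun m => finrank_le_of_coeff_mul_mem hF ?_
  rintro l _ ⟨f, hf, rfl⟩
  rw [Polynomial.finsetSum_coeff, Finset.sum_mul]
  refine Submodule.sum_mem _ fun i _ => ?_
  rw [Polynomial.coeff_monomial]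
  split_ifs
  · exact ⟨X i * f, add_comm 1 m ▸ (isHomogeneous_X k i).mul hf,
      map_mul (Ideal.Quotient.mkₐ k J) _ _⟩
  · simp

end HilbertFunction

section HomogeneousVectors

variable {ι σ k : Type*} [Field k]

lemma homogeneousComponent_mul_of_isHomogeneous (n : ℕ) (f : MvPolynomial σ k) {e : ℕ}
    {g : MvPolynomial σ k} (hg : g.IsHomogeneous e) :
    homogeneousComponent (n + e) (f * g) = homogeneousComponent n f * g := by
  let _ := gradedAlgebra (σ := σ) (R := k)
  have h := DirectSum.coe_decompose_mul_add_of_right_mem (homogeneousSubmodule σ k)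
    (a := f) (i := n) hg
  have hdecompose (p : MvPolynomial σ k) (i : ℕ) :
      (DirectSum.decompose (homogeneousSubmodule σ k) p i : MvPolynomial σ k) =
        homogeneousComponent i p := decomposition.decompose'_apply p i
  rwa [hdecompose, hdecompose] at h

variable (ι σ k) in
/-- The vectors all of whose coordinates are forms of degree `m`: the part of degree `m` of the free
graded module on `ι` generators of degree `0`. -/
noncomputable def homogeneousVectors (m : ℕ) : Submodule k (ι → MvPolynomial σ k) :=
  Submodule.pi Set.univ fun _ => homogeneousSubmodule σ k m

lemma mem_homogeneousVectors {m : ℕ} {w : ι → MvPolynomial σ k} :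
    w ∈ homogeneousVectors ι σ k m ↔ ∀ i, (w i).IsHomogeneous m := by
  simp [homogeneousVectors, Submodule.mem_pi]

variable (k) in
lemma finrank_homogeneousVectors [Finite σ] [Fintype ι] (m : ℕ) :
    Module.finrank k (homogeneousVectors ι σ k m) =
      Fintype.card ι * Module.finrank k (homogeneousSubmodule σ k m) := by
  let e : homogeneousVectors ι σ k m ≃ₗ[k] (ι → homogeneousSubmodule σ k m) :=
    { toFun w i := ⟨w.1 i, mem_homogeneousVectors.1 w.2 i⟩
      invFun w := ⟨fun i => w i, mem_homogeneousVectors.2 fun i => (w i).2⟩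
      map_add' _ _ := rfl
      map_smul' _ _ := rfl }
  simp [e.finrank_eq, Module.finrank_pi_fintype]

instance [Finite σ] [Finite ι] (m : ℕ) : FiniteDimensional k (homogeneousVectors ι σ k m) :=
  Module.Finite.iff_fg.2 <| Submodule.fg_pi fun _ => homogeneousSubmodule_fg σ k m

/-- The part of degree `n` of a vector of polynomials. -/
noncomputable def vectorComponent (n : ℕ) :
    (ι → MvPolynomial σ k) →ₗ[k] (ι → MvPolynomial σ k) :=
  (homogeneousComponent n).compLeft ι

lemma vectorComponent_mem (n : ℕ) (w : ι → MvPolynomial σ k) :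
    vectorComponent n w ∈ homogeneousVectors ι σ k n :=
  mem_homogeneousVectors.2 fun i => homogeneousComponent_isHomogeneous n (w i)

lemma vectorComponent_eq_self {n : ℕ} {w : ι → MvPolynomial σ k}
    (hw : w ∈ homogeneousVectors ι σ k n) : vectorComponent n w = w :=
  funext fun i => homogeneousComponent_eq_self (mem_homogeneousVectors.1 hw i)

lemma vectorComponent_smul (n : ℕ) (f : MvPolynomial σ k) {e : ℕ} {φ : ι → MvPolynomial σ k}
    (hφ : φ ∈ homogeneousVectors ι σ k e) :
    vectorComponent (n + e) (f • φ) = homogeneousComponent n f • φ :=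
  funext fun i =>
    homogeneousComponent_mul_of_isHomogeneous n f (mem_homogeneousVectors.1 hφ i)

lemma smul_mem_homogeneousVectors_iff {n e : ℕ} {f : MvPolynomial σ k} {φ : ι → MvPolynomial σ k}
    (hφ : φ ∈ homogeneousVectors ι σ k e) (hφ0 : φ ≠ 0) :
    f • φ ∈ homogeneousVectors ι σ k (n + e) ↔ f.IsHomogeneous n := by
  refine ⟨fun h => ?_, fun hf =>
    mem_homogeneousVectors.2 fun i => hf.mul (mem_homogeneousVectors.1 hφ i)⟩
  have hcomp := vectorComponent_smul n f hφ
  rw [vectorComponent_eq_self h] at hcomp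
  rw [smul_left_injective _ hφ0 hcomp]
  exact homogeneousComponent_isHomogeneous n f

lemma homogeneousComponent_dotProduct [Fintype ι] (n : ℕ) (w : ι → MvPolynomial σ k) {e : ℕ}
    {φ : ι → MvPolynomial σ k} (hφ : φ ∈ homogeneousVectors ι σ k e) :
    homogeneousComponent (n + e) (w ⬝ᵥ φ) = vectorComponent n w ⬝ᵥ φ := by
  simp only [dotProduct, map_sum]
  exact Finset.sum_congr rfl fun i _ =>
    homogeneousComponent_mul_of_isHomogeneous n (w i) (mem_homogeneousVectors.1 hφ i)

lemma vectorComponent_cross (n : ℕ) (w : Fin 3 → MvPolynomial σ k) {r : ℕ}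
    {u : Fin 3 → MvPolynomial σ k} (hu : u ∈ homogeneousVectors (Fin 3) σ k r) :
    vectorComponent (n + r) (u ⨯₃ w) = u ⨯₃ vectorComponent n w := by
  have h (i j : Fin 3) : homogeneousComponent (n + r) (u i * w j) =
      u i * homogeneousComponent n (w j) := by
    rw [mul_comm, mul_comm (u i),
      homogeneousComponent_mul_of_isHomogeneous n _ (mem_homogeneousVectors.1 hu i)]
  ext1 i
  fin_cases i <;> simp [vectorComponent, cross_apply, h]

lemma cross_mem_homogeneousVectors {n r : ℕ} {u w : Fin 3 → MvPolynomial σ k}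
    (hu : u ∈ homogeneousVectors (Fin 3) σ k r) (hw : w ∈ homogeneousVectors (Fin 3) σ k n) :
    u ⨯₃ w ∈ homogeneousVectors (Fin 3) σ k (n + r) := by
  rw [← vectorComponent_eq_self hw, ← vectorComponent_cross n w hu]
  exact vectorComponent_mem _ _

end HomogeneousVectors

section Syzygies

variable {A ι : Type*} [CommRing A] [Fintype ι]

/-- The module of relations `∑ wᵢ φᵢ = 0` among the coordinates of `φ`. -/
noncomputable def syzygies (φ : ι → A) : Submodule A (ι → A) :=
  LinearMap.ker (Fintype.linearCombination A φ)

lemma mem_syzygies {φ w : ι → A} : w ∈ syzygies φ ↔ w ⬝ᵥ φ = 0 := by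
  simp [syzygies, Fintype.linearCombination_apply, dotProduct]

lemma mem_syzygies_of_smul_mem [IsDomain A] {a : A} {φ w : ι → A} (ha : a ≠ 0)
    (h : a • w ∈ syzygies φ) : w ∈ syzygies φ := by
  rw [mem_syzygies, smul_dotProduct] at h
  exact mem_syzygies.2 ((smul_eq_zero.1 h).resolve_left ha)

lemma cross_mem_syzygies (φ w : Fin 3 → A) : φ ⨯₃ w ∈ syzygies φ := by
  rw [mem_syzygies, dotProduct_comm, dot_self_cross]

variable {k σ : Type*} [Field k]

/-- The syzygies of `φ` whose coordinates are forms of degree `m`. -/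
noncomputable def homogeneousSyzygies (φ : ι → MvPolynomial σ k) (m : ℕ) :
    Submodule k (ι → MvPolynomial σ k) :=
  homogeneousVectors ι σ k m ⊓ (syzygies φ).restrictScalars k

lemma vectorComponent_mem_homogeneousSyzygies {e : ℕ} {φ w : ι → MvPolynomial σ k}
    (hφ : φ ∈ homogeneousVectors ι σ k e) (n : ℕ) (hw : w ∈ syzygies φ) :
    vectorComponent n w ∈ homogeneousSyzygies φ n := by
  refine ⟨vectorComponent_mem n w, mem_syzygies.2 ?_⟩
  rw [← homogeneousComponent_dotProduct n w hφ, mem_syzygies.1 hw, map_zero]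

instance [Finite σ] (φ : ι → MvPolynomial σ k) (m : ℕ) :
    FiniteDimensional k (homogeneousSyzygies φ m) :=
  Submodule.finiteDimensional_inf_left _ _

lemma map_linearCombination_homogeneousVectors {e : ℕ} {φ : ι → MvPolynomial σ k}
    (hφ : φ ∈ homogeneousVectors ι σ k e) (m : ℕ) :
    (homogeneousVectors ι σ k m).map ((Fintype.linearCombination _ φ).restrictScalars k) =
      homogeneousSubmodule σ k (m + e) ⊓ (Ideal.span (Set.range φ)).restrictScalars k := by
  ext f
  constructor
  · rintro ⟨w, hw, rfl⟩
    rw [LinearMap.restrictScalars_apply, Fintype.linearCombination_apply]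
    exact ⟨IsHomogeneous.sum _ _ _ fun i _ =>
        (mem_homogeneousVectors.1 hw i).mul (mem_homogeneousVectors.1 hφ i),
      Ideal.sum_mem _ fun i _ => Ideal.mul_mem_left _ _ (Ideal.subset_span ⟨i, rfl⟩)⟩
  · rintro ⟨hf, hfI⟩
    obtain ⟨w, rfl⟩ := Ideal.mem_span_range_iff_exists_fun.1 hfI
    refine ⟨vectorComponent m w, vectorComponent_mem m w, ?_⟩
    change vectorComponent m w ⬝ᵥ φ = w ⬝ᵥ φ
    rw [← homogeneousComponent_dotProduct m w hφ]
    exact homogeneousComponent_eq_self hf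

lemma hilbertFunction_span_range_add [Finite σ] {e : ℕ} {φ : ι → MvPolynomial σ k}
    (hφ : φ ∈ homogeneousVectors ι σ k e) (m : ℕ) :
    hilbertFunction (Ideal.span (Set.range φ)) (m + e) +
        Fintype.card ι * Module.finrank k (homogeneousSubmodule σ k m) =
      Module.finrank k (homogeneousSubmodule σ k (m + e)) +
        Module.finrank k (homogeneousSyzygies φ m) := by
  have hI := hilbertFunction_add_finrank_inf (Ideal.span (Set.range φ)) (m + e)
  have hN := finrank_map_add_finrank_inf_ker (homogeneousVectors ι σ k m)
    ((Fintype.linearCombination _ φ).restrictScalars k)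
  rw [map_linearCombination_homogeneousVectors hφ, finrank_homogeneousVectors] at hN
  change _ + Module.finrank k (homogeneousSyzygies φ m) = _ at hN
  omega

end Syzygies

section SectionIdeal

section CommRing

variable {A : Type*} [CommRing A]

/-- The ideal of all `f` for which `f φ = u × w` for some syzygy `w` of `φ`. For `φ` and `u`
primitive, `w ↦ f` identifies it with the syzygies modulo `u`, so that it is the ideal of the
zero scheme of `u`, viewed as a section of a twist of the sheaf of relations. -/
noncomputable def sectionIdeal (φ u : Fin 3 → A) : Ideal A :=
  ((syzygies φ).map (crossProduct u)).comap (LinearMap.toSpanSingleton A _ φ)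

lemma mem_sectionIdeal {φ u : Fin 3 → A} {f : A} :
    f ∈ sectionIdeal φ u ↔ ∃ w ∈ syzygies φ, u ⨯₃ w = f • φ := by
  simp [sectionIdeal, Submodule.mem_comap, Submodule.mem_map]

lemma apply_mem_sectionIdeal {φ u : Fin 3 → A} (hu : u ∈ syzygies φ) (i : Fin 3) :
    u i ∈ sectionIdeal φ u := by
  refine mem_sectionIdeal.2 ⟨φ ⨯₃ Pi.single i 1, cross_mem_syzygies φ _, ?_⟩
  rw [cross_cross_eq_smul_sub_smul', dotProduct_comm φ, mem_syzygies.1 hu, zero_smul, sub_zero,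
    dotProduct_single, mul_one]

/-- `u` and `v` freely generate the syzygies of `φ`. -/
def IsSyzygyBasis (φ u v : Fin 3 → A) : Prop :=
  LinearIndependent A ![u, v] ∧ Submodule.span A {u, v} = syzygies φ

lemma IsSyzygyBasis.symm {φ u v : Fin 3 → A} (h : IsSyzygyBasis φ u v) : IsSyzygyBasis φ v u :=
  ⟨LinearIndependent.pair_symm_iff.1 h.1, Set.pair_comm u v ▸ h.2⟩

lemma IsSyzygyBasis.left_mem {φ u v : Fin 3 → A} (h : IsSyzygyBasis φ u v) : u ∈ syzygies φ :=
  h.2 ▸ Submodule.subset_span (Set.mem_insert u {v})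

variable [IsDomain A]

lemma IsSyzygyBasis.isPrimitive_left {φ u v : Fin 3 → A} (h : IsSyzygyBasis φ u v) :
    IsPrimitive u := by
  intro g hg
  choose u' hu' using hg
  obtain rfl : u = g • u' := funext hu'
  have hg : g ≠ 0 := fun hg => h.1.ne_zero 0 (by simp [hg])
  obtain ⟨a, b, hab⟩ : ∃ a b, a • g • u' + b • v = u' :=
    Submodule.mem_span_pair.1 (h.2 ▸ mem_syzygies_of_smul_mem hg h.left_mem)
  have hrel : (g * a - 1) • g • u' + (g * b) • v = 0 := by
    linear_combination (norm := module) g • hab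
  exact .of_mul_eq_one a (sub_eq_zero.1 (LinearIndependent.pair_iff.1 h.1 _ _ hrel).1)

variable [UniqueFactorizationMonoid A]

theorem isSyzygyBasis_of_cross_eq {φ u v : Fin 3 → A} (hφ : IsPrimitive φ) (h : u ⨯₃ v = φ) :
    IsSyzygyBasis φ u v := by
  have hu : u ∈ syzygies φ := mem_syzygies.2 (h ▸ dot_self_cross u v)
  have hv : v ∈ syzygies φ := mem_syzygies.2 (h ▸ dot_cross_self u v)
  have hprim : IsPrimitive u := fun p hp => by
    choose u' hu' using hp
    obtain rfl : u = p • u' := funext hu'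
    exact hφ p fun i => ⟨(u' ⨯₃ v) i, by simp [← h]⟩
  refine ⟨LinearIndependent.pair_iff.2 fun a b hab => ?_, le_antisymm ?_ fun w hw => ?_⟩
  · have hcross := congrArg (crossProduct u) hab
    rw [map_add, map_smul, map_smul, cross_self, h, smul_zero, zero_add, map_zero] at hcross
    obtain rfl := (smul_eq_zero.1 hcross).resolve_right hφ.ne_zero
    rw [zero_smul, add_zero] at hab
    exact ⟨(smul_eq_zero.1 hab).resolve_right hprim.ne_zero, rfl⟩
  · exact Submodule.span_le.2 (Set.pair_subset hu hv)
  · obtain ⟨f, hf⟩ := hφ.exists_cross_eq_smul (mem_syzygies.1 hu) (mem_syzygies.1 hw)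
    obtain ⟨g, hg⟩ := hprim.exists_eq_smul_of_cross_eq_zero (b := w - f • v) <| by
      rw [map_sub, map_smul, h, hf, sub_self]
    exact Submodule.mem_span_pair.2 ⟨g, f, by rw [← hg, sub_add_cancel]⟩

theorem IsSyzygyBasis.sectionIdeal_eq_top {φ u v : Fin 3 → A} (hφ : IsPrimitive φ)
    (h : IsSyzygyBasis φ u v) : sectionIdeal φ u = ⊤ := by
  have hu := h.left_mem
  have hv := h.symm.left_mem
  obtain ⟨c, hc⟩ := hφ.exists_cross_eq_smul (mem_syzygies.1 hu) (mem_syzygies.1 hv)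
  have hdvd (i : Fin 3) : c ∣ u i := by
    obtain ⟨w, hw, hwu⟩ := mem_sectionIdeal.1 (apply_mem_sectionIdeal hu i)
    obtain ⟨a, b, rfl⟩ := Submodule.mem_span_pair.1 (h.2 ▸ hw)
    rw [map_add, map_smul, map_smul, cross_self, hc, smul_zero, zero_add, smul_smul] at hwu
    exact ⟨b, by rw [← smul_left_injective _ hφ.ne_zero hwu, mul_comm]⟩
  exact Ideal.eq_top_of_isUnit_mem _ (mem_sectionIdeal.2 ⟨v, hv, hc⟩) (h.isPrimitive_left c hdvd)

end CommRing

section Saturation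

variable {σ k : Type*} [Field k]

lemma mem_span_X_image_of_X_mul_mem {s : Set σ} {l : σ} (hl : l ∉ s) {f : MvPolynomial σ k}
    (h : X l * f ∈ Ideal.span (X '' s)) : f ∈ Ideal.span (X '' s) := by
  rw [mem_ideal_span_X_image] at h ⊢
  intro m hm
  obtain ⟨i, hi, hmi⟩ := h (Finsupp.single l 1 + m) (by
    rwa [mem_support_iff, coeff_X_mul, ← mem_support_iff])
  exact ⟨i, hi, by simpa [ne_of_mem_of_not_mem hi hl |>.symm] using hmi⟩

lemma exists_eq_X_smul_of_X_smul_eq {ι : Type*} {i j : σ} (hij : i ≠ j)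
    {a b : ι → MvPolynomial σ k} (h : (X j : MvPolynomial σ k) • a = (X i : MvPolynomial σ k) • b) :
    ∃ c, a = (X i : MvPolynomial σ k) • c := by
  have hdvd (l : ι) : X i ∣ a l :=
    ((X_prime (R := k) (i := i)).dvd_or_dvd ⟨b l, congrFun h l⟩).resolve_left fun hX =>
      hij (X_dvd_X.1 hX)
  choose c hc using hdvd
  exact ⟨c, funext hc⟩

-- The differences `xⱼ wᵢ - xᵢ wⱼ` are multiples of `u`; the relation among them given by the Koszul
-- complex lets one modify `w₀` by a multiple of `u` to make it divisible by `x₀`.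
theorem isSaturated_sectionIdeal {φ u : Fin 3 → MvPolynomial (Fin 3) k} (hprim : IsPrimitive u)
    (hu : u ∈ syzygies φ) : IsSaturated (sectionIdeal φ u) := by
  intro f hf
  choose w hw hwf using fun i => mem_sectionIdeal.1 (hf i)
  have hpair (i j : Fin 3) : ∃ c : MvPolynomial (Fin 3) k,
      (X j : MvPolynomial (Fin 3) k) • w i - (X i : MvPolynomial (Fin 3) k) • w j = c • u := by
    refine hprim.exists_eq_smul_of_cross_eq_zero ?_
    rw [map_sub, map_smul, map_smul, hwf, hwf]
    module
  choose c hc using hpair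
  have hkoszul : X 2 * c 0 1 = X 1 * c 0 2 - X 0 * c 1 2 := by
    refine smul_left_injective _ hprim.ne_zero ?_
    simp only [mul_smul, sub_smul, ← hc]
    module
  obtain ⟨p, q, hpq⟩ : ∃ p q : MvPolynomial (Fin 3) k, p * X 0 + q * X 1 = c 0 1 := by
    rw [← Ideal.mem_span_pair, ← Set.image_pair]
    refine mem_span_X_image_of_X_mul_mem (l := 2) (by simp) ?_
    rw [hkoszul, Set.image_pair]
    exact Ideal.mem_span_pair.2 ⟨-c 1 2, c 0 2, by ring⟩
  obtain ⟨w', hw'⟩ : ∃ w', w 0 - q • u = (X 0 : MvPolynomial (Fin 3) k) • w' := by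
    refine exists_eq_X_smul_of_X_smul_eq (j := 1) (b := w 1 + p • u) (by decide) ?_
    rw [← sub_eq_zero, ← sub_eq_zero.2 (hc 0 1), ← hpq]
    module
  have hX : (X 0 : MvPolynomial (Fin 3) k) ≠ 0 := X_ne_zero 0
  refine mem_sectionIdeal.2 ⟨w', mem_syzygies_of_smul_mem hX (hw' ▸ ?_), ?_⟩
  · exact sub_mem (hw 0) (Submodule.smul_mem _ _ hu)
  · refine smul_right_injective _ hX ?_
    simp only
    rw [← map_smul, ← hw', map_sub, map_smul, cross_self, smul_zero, sub_zero, hwf, mul_smul]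

end Saturation

section Dimension

variable {σ k : Type*} [Field k] {φ u : Fin 3 → MvPolynomial σ k} {e r : ℕ}

lemma map_cross_homogeneousSyzygies (hφprim : IsPrimitive φ)
    (hφ : φ ∈ homogeneousVectors (Fin 3) σ k e) (hur : u ∈ homogeneousVectors (Fin 3) σ k r)
    (hu : u ∈ syzygies φ) (n : ℕ) :
    (homogeneousSyzygies φ (n + e)).map ((crossProduct u).restrictScalars k) =
      (homogeneousSubmodule σ k (n + r) ⊓ (sectionIdeal φ u).restrictScalars k).map
        ((LinearMap.toSpanSingleton _ _ φ).restrictScalars k) := by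
  ext z
  constructor
  · rintro ⟨w, ⟨hw, hwφ⟩, rfl⟩
    obtain ⟨f, hf⟩ := hφprim.exists_cross_eq_smul (mem_syzygies.1 hu) (mem_syzygies.1 hwφ)
    refine ⟨f, ⟨?_, mem_sectionIdeal.2 ⟨w, hwφ, hf⟩⟩, hf.symm⟩
    refine (smul_mem_homogeneousVectors_iff hφ hφprim.ne_zero).1 ?_
    rw [← hf, add_right_comm]
    exact cross_mem_homogeneousVectors hur hw
  · rintro ⟨f, ⟨hf, hfJ⟩, rfl⟩
    obtain ⟨w, hwφ, hw⟩ := mem_sectionIdeal.1 hfJ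
    refine ⟨vectorComponent (n + e) w,
      vectorComponent_mem_homogeneousSyzygies hφ _ hwφ, ?_⟩
    change u ⨯₃ vectorComponent (n + e) w = f • φ
    rw [← vectorComponent_cross _ _ hur, hw, add_right_comm, vectorComponent_smul _ _ hφ,
      homogeneousComponent_eq_self hf]

lemma homogeneousSyzygies_inf_ker_cross (hprim : IsPrimitive u)
    (hur : u ∈ homogeneousVectors (Fin 3) σ k r) (hu : u ∈ syzygies φ) (n : ℕ) :
    homogeneousSyzygies φ (n + r) ⊓ LinearMap.ker ((crossProduct u).restrictScalars k) =
      (homogeneousSubmodule σ k n).map ((LinearMap.toSpanSingleton _ _ u).restrictScalars k) := by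
  ext w
  constructor
  · rintro ⟨⟨hw, -⟩, hcross⟩
    obtain ⟨f, rfl⟩ := hprim.exists_eq_smul_of_cross_eq_zero hcross
    exact ⟨f, (smul_mem_homogeneousVectors_iff hur hprim.ne_zero).1 hw, rfl⟩
  · rintro ⟨f, hf, rfl⟩
    refine ⟨⟨(smul_mem_homogeneousVectors_iff hur hprim.ne_zero).2 hf,
      Submodule.smul_mem _ f hu⟩, ?_⟩
    change u ⨯₃ (f • u) = 0
    rw [map_smul, cross_self, smul_zero]

lemma finrank_homogeneousSyzygies_add_hilbertFunction [Finite σ] {q : ℕ} (hφprim : IsPrimitive φ)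
    (hφ : φ ∈ homogeneousVectors (Fin 3) σ k (r + q)) (hprim : IsPrimitive u)
    (hur : u ∈ homogeneousVectors (Fin 3) σ k r) (hu : u ∈ syzygies φ) (n : ℕ) :
    Module.finrank k (homogeneousSyzygies φ (n + (r + q))) +
        hilbertFunction (sectionIdeal φ u) (n + r) =
      Module.finrank k (homogeneousSubmodule σ k (n + q)) +
        Module.finrank k (homogeneousSubmodule σ k (n + r)) := by
  have hN := finrank_map_add_finrank_inf_ker (homogeneousSyzygies φ (n + (r + q)))
    ((crossProduct u).restrictScalars k)
  have hJ := hilbertFunction_add_finrank_inf (sectionIdeal φ u) (n + r)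
  rw [map_cross_homogeneousSyzygies hφprim hφ hur hu,
    finrank_map_of_injective _ (smul_left_injective _ hφprim.ne_zero),
    show n + (r + q) = n + q + r by ring, homogeneousSyzygies_inf_ker_cross hprim hur hu,
    finrank_map_of_injective _ (smul_left_injective _ hprim.ne_zero)] at hN
  rw [show n + (r + q) = n + q + r by ring]
  omega

end Dimension

theorem hilbertFunction_span_add_hilbertFunction_sectionIdeal {k : Type*} [Field k]
    {φ u : Fin 3 → MvPolynomial (Fin 3) k} {r q : ℕ} (hφprim : IsPrimitive φ)
    (hφ : φ ∈ homogeneousVectors (Fin 3) (Fin 3) k (r + q)) (hprim : IsPrimitive u)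
    (hur : u ∈ homogeneousVectors (Fin 3) (Fin 3) k r) (hu : u ∈ syzygies φ) (n : ℕ) :
    hilbertFunction (Ideal.span (Set.range φ)) (n + (r + q) + (r + q)) +
        hilbertFunction (sectionIdeal φ u) (n + r) + r * q = (r + q) ^ 2 := by
  have hI := hilbertFunction_span_range_add hφ (n + (r + q))
  have hJ := finrank_homogeneousSyzygies_add_hilbertFunction hφprim hφ hprim hur hu n
  have hdim := two_mul_finrank_homogeneousSubmodule_fin_three (k := k)
  have h₁ := hdim (n + (r + q))
  have h₂ := hdim (n + (r + q) + (r + q))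
  have h₃ := hdim (n + q)
  have h₄ := hdim (n + r)
  rw [Fintype.card_fin] at hI
  zify at *
  linarith

end SectionIdeal

section MinimalSyzygies

lemma isUnit_of_totalDegree_eq_zero {k σ : Type*} [Field k] {f : MvPolynomial σ k} (hf : f ≠ 0)
    (h : f.totalDegree = 0) : IsUnit f := by
  rw [totalDegree_eq_zero_iff_eq_C] at h
  rw [h] at hf ⊢
  exact (IsUnit.mk0 _ (C_ne_zero.1 hf)).map C

section

variable {ι σ k : Type*} [Field k] [Fintype ι]

/-- `u` is a nonzero homogeneous syzygy of `φ` of the least possible degree, which is `r`. -/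
structure IsMinimalSyzygy (φ : ι → MvPolynomial σ k) (r : ℕ) (u : ι → MvPolynomial σ k) :
    Prop where
  mem : u ∈ homogeneousSyzygies φ r
  ne_zero : u ≠ 0
  eq_zero_of_lt : ∀ n < r, ∀ w ∈ homogeneousSyzygies φ n, w = 0

lemma exists_isMinimalSyzygy_le {e : ℕ} {φ w : ι → MvPolynomial σ k}
    (hw : w ∈ homogeneousSyzygies φ e) (hw0 : w ≠ 0) : ∃ r ≤ e, ∃ u, IsMinimalSyzygy φ r u := by
  classical
  have hex : ∃ r, ∃ u ∈ homogeneousSyzygies φ r, u ≠ 0 := ⟨e, w, hw, hw0⟩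
  obtain ⟨u, hu, hu0⟩ := Nat.find_spec hex
  refine ⟨Nat.find hex, Nat.find_min' hex ⟨w, hw, hw0⟩, u, hu, hu0, fun n hn w hw => ?_⟩
  by_contra hw0
  exact Nat.find_min hex hn ⟨w, hw, hw0⟩

lemma IsMinimalSyzygy.isPrimitive {e r : ℕ} {φ u : ι → MvPolynomial σ k}
    (h : IsMinimalSyzygy φ r u) (hφ : φ ∈ homogeneousVectors ι σ k e) : IsPrimitive u := by
  intro g hg
  by_contra hunit
  choose u' hu' using hg
  have hu : u = g • u' := funext hu'
  obtain ⟨i, hi⟩ := Function.ne_iff.1 h.ne_zero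
  have hg : g ≠ 0 := by rintro rfl; simp [hu] at hi
  have hi' : u' i ≠ 0 := fun h0 => hi (by simp [hu', h0])
  have hu'φ : u' ∈ syzygies φ := mem_syzygies_of_smul_mem hg (hu ▸ h.mem.2)
  have hdeg : (u' i).totalDegree < r := by
    rw [← (mem_homogeneousVectors.1 h.mem.1 i).totalDegree hi, hu' i,
      totalDegree_mul_of_isDomain hg hi']
    have := mt (isUnit_of_totalDegree_eq_zero hg) hunit
    omega
  refine hi' ?_
  rw [← sum_homogeneousComponent (u' i)]
  refine Finset.sum_eq_zero fun n hn => ?_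
  rw [Finset.mem_range] at hn
  exact congrFun (h.eq_zero_of_lt n (by omega) _
    (vectorComponent_mem_homogeneousSyzygies hφ n hu'φ)) i

end

section

variable {σ k : Type*} [Field k] {φ u : Fin 3 → MvPolynomial σ k}

lemma exists_ne_zero_mem_homogeneousSyzygies {e : ℕ} (hφ : φ ∈ homogeneousVectors (Fin 3) σ k e)
    (hφ0 : φ ≠ 0) : ∃ w ∈ homogeneousSyzygies φ e, w ≠ 0 := by
  have hmem (i : Fin 3) : φ ⨯₃ Pi.single i 1 ∈ homogeneousSyzygies φ e := by
    have hi : Pi.single i 1 ∈ homogeneousVectors (Fin 3) σ k 0 := by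
      refine mem_homogeneousVectors.2 fun j => ?_
      obtain rfl | hij := eq_or_ne j i
      · rw [Pi.single_eq_same]; exact isHomogeneous_one σ k
      · rw [Pi.single_eq_of_ne hij]; exact isHomogeneous_zero σ k 0
    exact ⟨zero_add e ▸ cross_mem_homogeneousVectors hφ hi, cross_mem_syzygies φ _⟩
  by_contra! h
  have h0 := h _ (hmem 0)
  have h1 := h _ (hmem 1)
  simp only [cross_apply] at h0 h1
  refine hφ0 (funext fun i => ?_)
  fin_cases i
  · simpa using congrFun h1 2
  · simpa using congrFun h0 2
  · simpa using congrFun h0 1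

lemma IsMinimalSyzygy.sectionIdeal_eq_top_of_degree_zero (h : IsMinimalSyzygy φ 0 u) :
    sectionIdeal φ u = ⊤ := by
  obtain ⟨i, hi⟩ := Function.ne_iff.1 h.ne_zero
  exact Ideal.eq_top_of_isUnit_mem _ (apply_mem_sectionIdeal h.mem.2 i)
    (isUnit_of_totalDegree_eq_zero hi ((mem_homogeneousVectors.1 h.mem.1 i).totalDegree hi))

lemma IsMinimalSyzygy.hilbertFunction_sectionIdeal [Finite σ] {r q n : ℕ}
    (h : IsMinimalSyzygy φ r u) (hφ : φ ∈ homogeneousVectors (Fin 3) σ k (r + q)) (hφ0 : φ ≠ 0)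
    (hn : n + q < r) :
    hilbertFunction (sectionIdeal φ u) n = Module.finrank k (homogeneousSubmodule σ k n) := by
  have hbot : homogeneousSubmodule σ k n ⊓ (sectionIdeal φ u).restrictScalars k = ⊥ := by
    refine eq_bot_iff.2 fun f ⟨hf, hfJ⟩ => ?_
    obtain ⟨w, hw, hwf⟩ := mem_sectionIdeal.1 hfJ
    have hcomp := vectorComponent_cross (n + q) w h.mem.1
    rw [h.eq_zero_of_lt _ hn _ (vectorComponent_mem_homogeneousSyzygies hφ _ hw), map_zero, hwf,
      show n + q + r = n + (r + q) by ring, vectorComponent_smul n f hφ,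
      homogeneousComponent_eq_self hf] at hcomp
    exact (smul_eq_zero.1 hcomp).resolve_right hφ0
  rw [← hilbertFunction_add_finrank_inf (sectionIdeal φ u) n, hbot, finrank_bot, add_zero]

lemma exists_isSyzygyBasis_of_sectionIdeal_eq_top {r q : ℕ} (hφprim : IsPrimitive φ)
    (hφ : φ ∈ homogeneousVectors (Fin 3) σ k (r + q))
    (hu : u ∈ homogeneousVectors (Fin 3) σ k r) (h : sectionIdeal φ u = ⊤) :
    ∃ v ∈ homogeneousVectors (Fin 3) σ k q, IsSyzygyBasis φ u v := by
  obtain ⟨w, -, hw⟩ := mem_sectionIdeal.1 (h ▸ Submodule.mem_top : 1 ∈ sectionIdeal φ u)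
  refine ⟨vectorComponent q w, vectorComponent_mem q w, isSyzygyBasis_of_cross_eq hφprim ?_⟩
  rw [← vectorComponent_cross q w hu, hw, one_smul, add_comm, vectorComponent_eq_self hφ]

end

end MinimalSyzygies

section FreenessCriterion

variable {k : Type*} [Field k] {φ u v : Fin 3 → MvPolynomial (Fin 3) k}

theorem IsMinimalSyzygy.sectionIdeal_eq_top {r q m : ℕ} (h : IsMinimalSyzygy φ r u)
    (hφ : φ ∈ homogeneousVectors (Fin 3) (Fin 3) k (r + q)) (hφ0 : φ ≠ 0) (hm : r ≤ m)
    (hJ : hilbertFunction (sectionIdeal φ u) m + r * q + 1 = r + q) : sectionIdeal φ u = ⊤ := by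
  have hmono : Monotone (hilbertFunction (sectionIdeal φ u)) :=
    (isSaturated_sectionIdeal (h.isPrimitive hφ) h.mem.2).monotone_hilbertFunction
  obtain rfl | hr := Nat.eq_zero_or_pos r
  · exact h.sectionIdeal_eq_top_of_degree_zero
  obtain rfl | hq := Nat.eq_zero_or_pos q
  · obtain ⟨n, rfl⟩ := Nat.exists_eq_add_of_lt hr
    have hn := h.hilbertFunction_sectionIdeal hφ hφ0 (n := n) (by omega)
    have hdim := two_mul_finrank_homogeneousSubmodule_fin_three (k := k) n
    have hle := hmono (show n ≤ m by omega)
    rw [← hn] at hdim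
    nlinarith
  · have hzero : hilbertFunction (sectionIdeal φ u) m = 0 := by nlinarith
    exact eq_top_of_hilbertFunction_zero_eq_zero
      (Nat.le_zero.1 ((hmono (Nat.zero_le m)).trans_eq hzero))

theorem exists_isSyzygyBasis_of_hilbertFunction {s : ℕ} (hφprim : IsPrimitive φ)
    (hφ : φ ∈ homogeneousVectors (Fin 3) (Fin 3) k (1 + s))
    (h : ∀ᶠ m in atTop, hilbertFunction (Ideal.span (Set.range φ)) m + s = (1 + s) ^ 2) :
    ∃ u ∈ homogeneousVectors (Fin 3) (Fin 3) k 1,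
      ∃ v ∈ homogeneousVectors (Fin 3) (Fin 3) k s, IsSyzygyBasis φ u v := by
  obtain ⟨w, hw, hw0⟩ := exists_ne_zero_mem_homogeneousSyzygies hφ hφprim.ne_zero
  obtain ⟨r, hr, u, hu⟩ := exists_isMinimalSyzygy_le hw hw0
  obtain ⟨q, hq⟩ := Nat.exists_eq_add_of_le hr
  rw [hq] at hφ h
  obtain ⟨M, hM⟩ := eventually_atTop.1 h
  have hI := hM (M + (r + q) + (r + q)) (by omega)
  have hsum := hilbertFunction_span_add_hilbertFunction_sectionIdeal hφprim hφ
    (hu.isPrimitive hφ) hu.mem.1 hu.mem.2 M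
  have htop : sectionIdeal φ u = ⊤ :=
    hu.sectionIdeal_eq_top hφ hφprim.ne_zero (Nat.le_add_left r M) (by omega)
  obtain ⟨v, hv, hbasis⟩ :=
    exists_isSyzygyBasis_of_sectionIdeal_eq_top hφprim hφ hu.mem.1 htop
  rw [htop, hilbertFunction_top] at hsum
  have hdegrees : ((r : ℤ) - 1) * (q - 1) = 0 := by
    zify at *
    linarith
  rcases mul_eq_zero.1 hdegrees with h1 | h1
  · obtain ⟨rfl, rfl⟩ : r = 1 ∧ q = s := by omega
    exact ⟨u, hu.mem.1, v, hv, hbasis⟩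
  · obtain ⟨rfl, rfl⟩ : q = 1 ∧ r = s := by omega
    exact ⟨v, hv, u, hu.mem.1, hbasis.symm⟩

theorem IsSyzygyBasis.hilbertFunction_span_add {r q m : ℕ} (h : IsSyzygyBasis φ u v)
    (hφprim : IsPrimitive φ) (hφ : φ ∈ homogeneousVectors (Fin 3) (Fin 3) k (r + q))
    (hu : u ∈ homogeneousVectors (Fin 3) (Fin 3) k r) (hm : 2 * (r + q) ≤ m) :
    hilbertFunction (Ideal.span (Set.range φ)) m + r * q = (r + q) ^ 2 := by
  obtain ⟨n, rfl⟩ : ∃ n, m = n + (r + q) + (r + q) := ⟨m - 2 * (r + q), by omega⟩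
  rw [← hilbertFunction_span_add_hilbertFunction_sectionIdeal hφprim hφ h.isPrimitive_left hu
    h.left_mem n, h.sectionIdeal_eq_top hφprim, hilbertFunction_top, add_zero]

theorem eventually_hilbertFunction_add_iff_exists_isSyzygyBasis {s : ℕ} (hφprim : IsPrimitive φ)
    (hφ : φ ∈ homogeneousVectors (Fin 3) (Fin 3) k (1 + s)) :
    (∀ᶠ m in atTop, hilbertFunction (Ideal.span (Set.range φ)) m + s = (1 + s) ^ 2) ↔
      ∃ u ∈ homogeneousVectors (Fin 3) (Fin 3) k 1,
        ∃ v ∈ homogeneousVectors (Fin 3) (Fin 3) k s, IsSyzygyBasis φ u v := by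
  refine ⟨exists_isSyzygyBasis_of_hilbertFunction hφprim hφ, fun ⟨u, hu, v, _, h⟩ => ?_⟩
  filter_upwards [eventually_ge_atTop (2 * (1 + s))] with m hm
  simpa using h.hilbertFunction_span_add hφprim hφ hu hm

end FreenessCriterion

end SyzygyFreeness

open SyzygyFreeness in
theorem stmt1_general (k : Type*) [Field k] (d : ℕ) (hd : 2 ≤ d)
    (φ : Fin 3 → MvPolynomial (Fin 3) k)
    (hφ : ∀ i, (φ i).IsHomogeneous (d - 1))
    (I : Ideal (MvPolynomial (Fin 3) k))
    (hI : I = Ideal.span (Set.range φ))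
    (hdim : ringKrullDim (MvPolynomial (Fin 3) k ⧸ I) ≤ 1) :
    (∀ᶠ m in atTop,
        (Module.finrank k
            ((homogeneousSubmodule (Fin 3) k m).map
              (Ideal.Quotient.mkₐ k I).toLinearMap) : ℤ)
          = ((d : ℤ) - 1) ^ 2 - ((d : ℤ) - 2))
    ↔ ∃ u v : Fin 3 → MvPolynomial (Fin 3) k,
        (∑ i, u i * φ i = 0) ∧ (∑ i, v i * φ i = 0) ∧
        (∀ i, (u i).IsHomogeneous 1) ∧ (∀ i, (v i).IsHomogeneous (d - 2)) ∧
        LinearIndependent (MvPolynomial (Fin 3) k) ![u, v] ∧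
        (∀ w : Fin 3 → MvPolynomial (Fin 3) k,
          (∑ i, w i * φ i = 0) ↔
            w ∈ Submodule.span (MvPolynomial (Fin 3) k) {u, v}) := by
  subst hI
  obtain ⟨s, rfl⟩ := Nat.exists_eq_add_of_le hd
  have hφprim : IsPrimitive φ := isPrimitive_of_ringKrullDim_quotient_lt <|
    (add_le_add_left hdim 1).trans_lt (by norm_num)
  rw [show 2 + s - 1 = 1 + s by omega, ← mem_homogeneousVectors] at hφ
  have hcast (m : ℕ) : (hilbertFunction (Ideal.span (Set.range φ)) m : ℤ) =
      (((2 + s : ℕ) : ℤ) - 1) ^ 2 - (((2 + s : ℕ) : ℤ) - 2) ↔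
        hilbertFunction (Ideal.span (Set.range φ)) m + s = (1 + s) ^ 2 := by
    zify
    constructor <;> intro h <;> linarith
  refine ((eventually_congr (.of_forall hcast)).trans
    (eventually_hilbertFunction_add_iff_exists_isSyzygyBasis hφprim hφ)).trans ?_
  simp only [Nat.add_sub_cancel_left]
  constructor
  · rintro ⟨u, hu, v, hv, h⟩
    exact ⟨u, v, mem_syzygies.1 h.left_mem, mem_syzygies.1 h.symm.left_mem,
      mem_homogeneousVectors.1 hu, mem_homogeneousVectors.1 hv, h.1,
      fun w => by rw [h.2]; exact mem_syzygies.symm⟩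
  · rintro ⟨u, v, -, -, hu, hv, hli, hspan⟩
    exact ⟨u, mem_homogeneousVectors.2 hu, v, mem_homogeneousVectors.2 hv, hli,
      Submodule.ext fun w => (hspan w).symm.trans mem_syzygies.symm⟩

/-- **Freeness criterion** (Theorem, part 1, equality case): with `I = (φ₀,φ₁,φ₂)`
generated by three homogeneous polynomials of degree `d-1` and `dim R/I ≤ 1`,
the eventual Hilbert function of `R/I` equals `(d-1)² - (d-2)`
(i.e. `d-2 = (d-1)² - τ(Z)`) if and only if the syzygy module
`N = {(a,b,c) : aφ₀ + bφ₁ + cφ₂ = 0}` is freely generated by two syzygies of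
degrees `1` and `d-2`, i.e. the sheaf of relations is `O(-1) ⊕ O(2-d)`. -/
theorem stmt1 (k : Type*) [Field k] [IsAlgClosed k] (d : ℕ) (hd : 2 ≤ d)
    (φ : Fin 3 → MvPolynomial (Fin 3) k)
    (hφ : ∀ i, (φ i).IsHomogeneous (d - 1))
    (I : Ideal (MvPolynomial (Fin 3) k))
    (hI : I = Ideal.span (Set.range φ))
    (hdim : ringKrullDim (MvPolynomial (Fin 3) k ⧸ I) ≤ 1) :
    (∀ᶠ m in atTop,
        (Module.finrank k
            ((homogeneousSubmodule (Fin 3) k m).map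
              (Ideal.Quotient.mkₐ k I).toLinearMap) : ℤ)
          = ((d : ℤ) - 1) ^ 2 - ((d : ℤ) - 2))
    ↔ ∃ u v : Fin 3 → MvPolynomial (Fin 3) k,
        (∑ i, u i * φ i = 0) ∧ (∑ i, v i * φ i = 0) ∧
        (∀ i, (u i).IsHomogeneous 1) ∧ (∀ i, (v i).IsHomogeneous (d - 2)) ∧
        LinearIndependent (MvPolynomial (Fin 3) k) ![u, v] ∧
        (∀ w : Fin 3 → MvPolynomial (Fin 3) k,
          (∑ i, w i * φ i = 0) ↔
            w ∈ Submodule.span (MvPolynomial (Fin 3) k) {u, v}) :=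
  stmt1_general k d hd φ hφ I hI hdim
end

section
/- Let k be an algebraically closed field, d ≥ 6 an integer, and φ₀, φ₁, φ₂ ∈ R = k[x,y,z] homogeneous polynomials of degree d−1 generating the ideal I = (φ₀, φ₁, φ₂). Assume the Krull dimension of R/I is at most 1. Then dim_k (R/I)_m = (d−1)² − (d−1) for all sufficiently large m (i.e., (d−1)² − τ(Z) = d−1, which translates the condition −c₁(E) = c₂(E)) if and only if the sheaf of relations E is nearly free of exponents (1, d−1), i.e., if and only if there exist syzygies u, v₁, v₂ ∈ N, with u homogeneous of degree 1 and v₁, v₂ homogeneous of degree d−1, such that N = R·u + R·v₁ + R·v₂ and the relation module {(a,b,c) ∈ R³ : a·u + b·v₁ + c·v₂ = 0 in R³} is generated by a single nonzero element (a,b,c) with a homogeneous of degree d−1 and b, c homogeneous of degree 1. -/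
open MvPolynomial Filter

/-!
Put `e = d - 1`, let `N` be the syzygy module of `φ`, and let `u` be a nonzero syzygy of least
degree `r`. Since `R/I` has dimension at most one, the `φ i` have no common factor, and neither
have the entries of `u`. If `v` is another syzygy, `u ⨯₃ v` is orthogonal to `u` and `v`, as `φ`
is, so that `u ⨯₃ v = t φ`. The assignment `v ↦ t` embeds `N / R u` into `R` as an ideal `J`, the
Bourbaki ideal of `u`, which is saturated, and counting dimensions gives
`h_{R/I} + h_{R/J} + r e = e² + r²` in large degrees. If `h_{R/I} = e² - e` eventually, then
`h_{R/J} = e - r e + r²` eventually, and for `e ≥ 5` this forces `r = 1` and `h_{R/J} = 1`: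
`J` is the ideal of a point, generated by two linear entries `u i`, `u j` of `u`. Lifting them to
the Koszul syzygies `φ ⨯₃ eᵢ` and `φ ⨯₃ eⱼ` resolves `N` explicitly. The converse is a dimension
count along the resolution.
-/

/-! ### Homogeneous polynomials -/

section Homogeneous

open scoped Matrix

variable {σ ι R : Type*} [CommRing R]

/-- The embedding `f ↦ ∑ₙ fₙ Tⁿ` of a polynomial ring into its polynomials in one variable `T`,
where `fₙ` is the homogeneous component of degree `n`. It turns homogeneous polynomials into
monomials in `T`. -/
noncomputable def gradingHom (σ R : Type*) [CommRing R] :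
    MvPolynomial σ R →ₐ[R] Polynomial (MvPolynomial σ R) :=
  aeval fun i => Polynomial.C (X i) * Polynomial.X

lemma gradingHom_monomial (s : σ →₀ ℕ) (c : R) :
    gradingHom σ R (monomial s c) = Polynomial.C (monomial s c) * Polynomial.X ^ s.degree := by
  rw [gradingHom, aeval_monomial]
  simp only [mul_pow, Finsupp.prod]
  rw [Finset.prod_mul_distrib, Finset.prod_pow_eq_pow_sum, monomial_eq, Finsupp.degree_apply]
  simp only [Finsupp.prod, map_mul, map_prod, map_pow]
  rw [mul_assoc]
  rfl

lemma coeff_gradingHom (f : MvPolynomial σ R) (n : ℕ) :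
    (gradingHom σ R f).coeff n = homogeneousComponent n f := by
  induction f using MvPolynomial.induction_on' with
  | monomial s c =>
    rw [gradingHom_monomial, Polynomial.coeff_C_mul_X_pow,
      homogeneousComponent_of_mem (isHomogeneous_monomial c rfl)]
  | add p q hp hq => simp [hp, hq]

lemma gradingHom_of_isHomogeneous {f : MvPolynomial σ R} {n : ℕ} (hf : f.IsHomogeneous n) :
    gradingHom σ R f = Polynomial.C f * Polynomial.X ^ n := by
  ext1 j
  rw [coeff_gradingHom, Polynomial.coeff_C_mul_X_pow, homogeneousComponent_of_mem hf]

lemma isHomogeneous_of_gradingHom_eq {f g : MvPolynomial σ R} {n : ℕ}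
    (h : gradingHom σ R f = Polynomial.C g * Polynomial.X ^ n) : f.IsHomogeneous n := by
  have hcomp (j : ℕ) : homogeneousComponent j f = if j = n then g else 0 := by
    rw [← coeff_gradingHom, h, Polynomial.coeff_C_mul_X_pow]
  rw [← sum_homogeneousComponent f]
  refine IsHomogeneous.sum _ _ _ fun j _ => ?_
  by_cases hj : j = n
  · exact hj ▸ homogeneousComponent_isHomogeneous j f
  · simpa only [hcomp, if_neg hj] using isHomogeneous_zero σ R n

lemma homogeneousComponent_mul_of_isHomogeneous (f : MvPolynomial σ R) {g : MvPolynomial σ R}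
    {n : ℕ} (m : ℕ) (hg : g.IsHomogeneous n) :
    homogeneousComponent (m + n) (f * g) = homogeneousComponent m f * g := by
  rw [← coeff_gradingHom, map_mul, gradingHom_of_isHomogeneous hg, ← mul_assoc,
    Polynomial.coeff_mul_X_pow, Polynomial.coeff_mul_C, coeff_gradingHom]

lemma isHomogeneous_dotProduct [Fintype ι] {c v : ι → MvPolynomial σ R} {b : ι → ℕ} {m : ℕ}
    (hv : ∀ i, (v i).IsHomogeneous (b i)) (hb : ∀ i, b i ≤ m)
    (hc : ∀ i, (c i).IsHomogeneous (m - b i)) : (c ⬝ᵥ v).IsHomogeneous m :=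
  IsHomogeneous.sum _ _ _ fun i _ => Nat.sub_add_cancel (hb i) ▸ (hc i).mul (hv i)

lemma homogeneousComponent_dotProduct [Fintype ι] {v : ι → MvPolynomial σ R} {b : ι → ℕ} {m : ℕ}
    (hv : ∀ i, (v i).IsHomogeneous (b i)) (hb : ∀ i, b i ≤ m) (c : ι → MvPolynomial σ R) :
    homogeneousComponent m (c ⬝ᵥ v) = (fun i => homogeneousComponent (m - b i) (c i)) ⬝ᵥ v := by
  rw [dotProduct, map_sum]
  refine Finset.sum_congr rfl fun i _ => ?_
  rw [← homogeneousComponent_mul_of_isHomogeneous _ _ (hv i), Nat.sub_add_cancel (hb i)]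

lemma isHomogeneous_cross {u v : Fin 3 → MvPolynomial σ R} {r m : ℕ}
    (hu : ∀ i, (u i).IsHomogeneous r) (hv : ∀ i, (v i).IsHomogeneous m) (i : Fin 3) :
    ((u ⨯₃ v) i).IsHomogeneous (r + m) := by
  rw [cross_apply]
  fin_cases i <;> exact ((hu _).mul (hv _)).sub ((hu _).mul (hv _))

lemma homogeneousComponent_cross {u : Fin 3 → MvPolynomial σ R} {r : ℕ}
    (hu : ∀ i, (u i).IsHomogeneous r) (v : Fin 3 → MvPolynomial σ R) (m : ℕ) (i : Fin 3) :
    homogeneousComponent (m + r) ((u ⨯₃ v) i) =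
      (u ⨯₃ fun j => homogeneousComponent m (v j)) i := by
  have hmul (a b : Fin 3) : homogeneousComponent (m + r) (u a * v b) =
      u a * homogeneousComponent m (v b) := by
    rw [mul_comm, homogeneousComponent_mul_of_isHomogeneous _ _ (hu a), mul_comm]
  fin_cases i <;> simp [cross_apply, hmul]

lemma isHomogeneous_single_one [DecidableEq ι] (i j : ι) :
    ((Pi.single i 1 : ι → MvPolynomial σ R) j).IsHomogeneous 0 := by
  obtain rfl | hj := eq_or_ne j i
  · simpa only [Pi.single_eq_same] using isHomogeneous_one σ R
  · simpa only [Pi.single_eq_of_ne hj] using isHomogeneous_zero σ R 0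

lemma constantCoeff_eq_zero_of_isHomogeneous {f : MvPolynomial σ R} {n : ℕ}
    (hf : f.IsHomogeneous n) (hn : n ≠ 0) : constantCoeff f = 0 :=
  hf.coeff_eq_zero (by rwa [map_zero, ne_comm])

lemma not_isUnit_of_isHomogeneous [Nontrivial R] {f : MvPolynomial σ R} {n : ℕ}
    (hf : f.IsHomogeneous n) (hn : n ≠ 0) : ¬IsUnit f :=
  fun h => not_isUnit_zero (constantCoeff_eq_zero_of_isHomogeneous hf hn ▸ h.map constantCoeff)

lemma mem_span_X_image_of_X_mul_mem {s : Set σ} {j : σ} (hj : j ∉ s) {f : MvPolynomial σ R}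
    (h : X j * f ∈ Ideal.span (X '' s)) : f ∈ Ideal.span (X '' s) := by
  classical
  rw [mem_ideal_span_X_image] at h ⊢
  intro m hm
  obtain ⟨i, hi, hmi⟩ := h (Finsupp.single j 1 + m) <| by
    rw [support_X_mul]
    exact Finset.mem_map_of_mem _ hm
  refine ⟨i, hi, ?_⟩
  rwa [Finsupp.add_apply, Finsupp.single_eq_of_ne (ne_of_mem_of_not_mem hi hj), zero_add] at hmi

variable [IsDomain R]

lemma exists_isHomogeneous_of_mul {f g : MvPolynomial σ R} {n : ℕ} (h : (f * g).IsHomogeneous n)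
    (h0 : f * g ≠ 0) : ∃ i j, i + j = n ∧ f.IsHomogeneous i ∧ g.IsHomogeneous j := by
  obtain ⟨i, j, b, c, hij, hbc, hf, hg⟩ := mul_eq_mul_prime_pow Polynomial.prime_X
    ((map_mul _ f g).symm.trans (gradingHom_of_isHomogeneous h))
  have hunits : b.natDegree + c.natDegree = 0 := by
    have hbc0 : b * c ≠ 0 := hbc ▸ Polynomial.C_ne_zero.mpr h0
    rw [← Polynomial.natDegree_mul (left_ne_zero_of_mul hbc0) (right_ne_zero_of_mul hbc0), ← hbc,
      Polynomial.natDegree_C]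
  rw [Polynomial.eq_C_of_natDegree_eq_zero (p := b) (by omega)] at hf
  rw [Polynomial.eq_C_of_natDegree_eq_zero (p := c) (by omega)] at hg
  exact ⟨i, j, hij, isHomogeneous_of_gradingHom_eq hf, isHomogeneous_of_gradingHom_eq hg⟩

lemma isHomogeneous_of_mul_right {f g : MvPolynomial σ R} {m n : ℕ} (hg : g.IsHomogeneous n)
    (h : (f * g).IsHomogeneous (m + n)) (hg0 : g ≠ 0) : f.IsHomogeneous m := by
  have hfg : homogeneousComponent m f * g = f * g := by
    rw [← homogeneousComponent_mul_of_isHomogeneous f m hg, homogeneousComponent_eq_self h]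
  exact mul_right_cancel₀ hg0 hfg ▸ homogeneousComponent_isHomogeneous m f

lemma isRelPrime_X_X {i j : σ} (hij : i ≠ j) : IsRelPrime (X i : MvPolynomial σ R) (X j) :=
  X_prime.irreducible.isRelPrime_iff_not_dvd.2 (mt X_dvd_X.1 hij)

end Homogeneous

/-! ### Dimensions of graded pieces -/

section GradedPieces

variable {k : Type*} [Field k] {σ ι : Type*}

lemma finrank_map_add_finrank_inf_ker {V W : Type*} [AddCommGroup V] [Module k V]
    [AddCommGroup W] [Module k W] (f : V →ₗ[k] W) (p : Submodule k V) [FiniteDimensional k p] :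
    Module.finrank k (p.map f) + Module.finrank k (p ⊓ LinearMap.ker f : Submodule k V) =
      Module.finrank k p := by
  rw [← (f.domRestrict p).finrank_range_add_finrank_ker, LinearMap.range_domRestrict,
    LinearMap.ker_domRestrict, ← p.map_comap_subtype (LinearMap.ker f),
    Submodule.finrank_map_subtype_eq]

instance [Finite σ] (n : ℕ) : FiniteDimensional k (homogeneousSubmodule σ k n) :=
  Module.Finite.iff_fg.mpr (homogeneousSubmodule_fg _ _ n)

lemma finrank_homogeneousSubmodule [Fintype σ] (n : ℕ) :
    Module.finrank k (homogeneousSubmodule σ k n) = (Fintype.card σ + n - 1).choose n := by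
  classical
  have hs : {d : σ →₀ ℕ | d.degree = n} = ↑(Finset.finsuppAntidiag (Finset.univ : Finset σ) n) := by
    ext d
    simp [Finset.mem_finsuppAntidiag, Finsupp.degree_eq_sum]
  rw [homogeneousSubmodule_eq_finsupp_supported,
    (AddMonoidAlgebra.supportedEquivFinsupp {d : σ →₀ ℕ | d.degree = n}).finrank_eq, hs,
    Module.finrank_finsupp_self]
  simp [Finset.card_finsuppAntidiag_nat_eq_choose]

lemma two_mul_finrank_homogeneousSubmodule_fin_three (n : ℕ) :
    2 * Module.finrank k (homogeneousSubmodule (Fin 3) k n) = (n + 1) * (n + 2) := by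
  rw [finrank_homogeneousSubmodule, Fintype.card_fin, show 3 + n - 1 = n + 2 by omega,
    Nat.choose_symm_add, Nat.choose_two_right,
    Nat.mul_div_cancel' (Nat.even_mul_pred_self _).two_dvd]
  simp [mul_comm]

/-- The vectors of polynomials whose `i`-th entry is homogeneous of degree `b i`. -/
noncomputable def homogeneousVectors (k σ : Type*) [Field k] (b : ι → ℕ) :
    Submodule k (ι → MvPolynomial σ k) :=
  Submodule.pi Set.univ fun i => homogeneousSubmodule σ k (b i)

lemma mem_homogeneousVectors {b : ι → ℕ} {w : ι → MvPolynomial σ k} :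
    w ∈ homogeneousVectors k σ b ↔ ∀ i, (w i).IsHomogeneous (b i) := by
  simp [homogeneousVectors, Submodule.mem_pi]

/-- A vector of homogeneous polynomials, read in the product of the graded pieces. -/
noncomputable def homogeneousVectorsEquiv (b : ι → ℕ) :
    homogeneousVectors k σ b ≃ₗ[k] ∀ i, homogeneousSubmodule σ k (b i) where
  toFun w i := ⟨w.1 i, mem_homogeneousVectors.1 w.2 i⟩
  invFun w := ⟨fun i => w i, mem_homogeneousVectors.2 fun i => (w i).2⟩
  map_add' _ _ := rfl
  map_smul' _ _ := rfl

instance [Finite σ] [Finite ι] (b : ι → ℕ) : FiniteDimensional k (homogeneousVectors k σ b) :=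
  Module.Finite.equiv (homogeneousVectorsEquiv b).symm

lemma finrank_homogeneousVectors [Finite σ] [Fintype ι] (b : ι → ℕ) :
    Module.finrank k (homogeneousVectors k σ b) =
      ∑ i, Module.finrank k (homogeneousSubmodule σ k (b i)) := by
  rw [(homogeneousVectorsEquiv b).finrank_eq, Module.finrank_pi_fintype]

/-- The homogeneous elements of degree `m` of an ideal. -/
noncomputable def gradedPiece (I : Ideal (MvPolynomial σ k)) (m : ℕ) :
    Submodule k (MvPolynomial σ k) :=
  homogeneousSubmodule σ k m ⊓ I.restrictScalars k

lemma mem_gradedPiece {I : Ideal (MvPolynomial σ k)} {m : ℕ} {f : MvPolynomial σ k} :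
    f ∈ gradedPiece I m ↔ f.IsHomogeneous m ∧ f ∈ I := Iff.rfl

instance [Finite σ] (I : Ideal (MvPolynomial σ k)) (m : ℕ) :
    FiniteDimensional k (gradedPiece I m) :=
  Submodule.finiteDimensional_inf_left _ _

/-- The Hilbert function of the quotient by an ideal `I`, homogeneous or not: the dimension of
the image in the quotient of the polynomials that are homogeneous of degree `m`. -/
noncomputable def hilbertFunction (I : Ideal (MvPolynomial σ k)) (m : ℕ) : ℕ :=
  Module.finrank k ((homogeneousSubmodule σ k m).map (Ideal.Quotient.mkₐ k I).toLinearMap)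

lemma hilbertFunction_add_finrank_gradedPiece [Finite σ] (I : Ideal (MvPolynomial σ k)) (m : ℕ) :
    hilbertFunction I m + Module.finrank k (gradedPiece I m) =
      Module.finrank k (homogeneousSubmodule σ k m) := by
  have hker : LinearMap.ker (Ideal.Quotient.mkₐ k I).toLinearMap = I.restrictScalars k := by
    ext f
    exact Ideal.Quotient.eq_zero_iff_mem
  rw [← finrank_map_add_finrank_inf_ker (Ideal.Quotient.mkₐ k I).toLinearMap
    (homogeneousSubmodule σ k m), hker]
  rfl

lemma finrank_map_toSpanSingleton {v : ι → MvPolynomial σ k} (hv : v ≠ 0)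
    (p : Submodule k (MvPolynomial σ k)) :
    Module.finrank k
        (p.map ((LinearMap.toSpanSingleton (MvPolynomial σ k) _ v).restrictScalars k)) =
      Module.finrank k p := by
  have hinj : Function.Injective
      ((LinearMap.toSpanSingleton (MvPolynomial σ k) _ v).restrictScalars k) :=
    fun a b hab => smul_left_injective _ hv hab
  exact (Submodule.equivMapOfInjective _ hinj p).finrank_eq.symm

end GradedPieces

/-! ### Graded syzygies -/

section Syzygies

open scoped Matrix

variable {k : Type*} [Field k] {σ ι κ : Type*} [Fintype ι] [Fintype κ]

/-- The syzygies of the family `φ` whose entries are all homogeneous of degree `m`. -/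
noncomputable def gradedSyzygies (φ : ι → MvPolynomial σ k) (m : ℕ) :
    Submodule k (ι → MvPolynomial σ k) :=
  homogeneousVectors k σ (fun _ => m) ⊓
    LinearMap.ker ((Fintype.linearCombination (MvPolynomial σ k) φ).restrictScalars k)

lemma mem_gradedSyzygies {φ w : ι → MvPolynomial σ k} {m : ℕ} :
    w ∈ gradedSyzygies φ m ↔ (∀ i, (w i).IsHomogeneous m) ∧ w ⬝ᵥ φ = 0 :=
  and_congr mem_homogeneousVectors Iff.rfl

instance [Finite σ] (φ : ι → MvPolynomial σ k) (m : ℕ) :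
    FiniteDimensional k (gradedSyzygies φ m) :=
  Submodule.finiteDimensional_inf_left _ _

lemma finrank_gradedPiece_add_finrank_gradedSyzygies [Finite σ] {φ : ι → MvPolynomial σ k} {e : ℕ}
    (hφ : ∀ i, (φ i).IsHomogeneous e) (m : ℕ) :
    Module.finrank k (gradedPiece (Ideal.span (Set.range φ)) (m + e)) +
        Module.finrank k (gradedSyzygies φ m) =
      Fintype.card ι * Module.finrank k (homogeneousSubmodule σ k m) := by
  have himage : (homogeneousVectors k σ fun _ => m).map
      ((Fintype.linearCombination (MvPolynomial σ k) φ).restrictScalars k) =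
        gradedPiece (Ideal.span (Set.range φ)) (m + e) := by
    ext f
    simp only [mem_gradedPiece, Ideal.mem_span_range_iff_exists_fun, Submodule.mem_map,
      mem_homogeneousVectors]
    constructor
    · rintro ⟨c, hc, rfl⟩
      exact ⟨isHomogeneous_dotProduct hφ (fun _ => Nat.le_add_left e m)
        (by simpa only [Nat.add_sub_cancel] using hc), c, rfl⟩
    · rintro ⟨hf, c, rfl⟩
      refine ⟨fun i => homogeneousComponent m (c i),
        fun i => homogeneousComponent_isHomogeneous m (c i), ?_⟩
      have := homogeneousComponent_dotProduct hφ (fun _ => Nat.le_add_left e m) c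
      simp only [Nat.add_sub_cancel] at this
      exact this.symm.trans (homogeneousComponent_eq_self hf)
  rw [← himage, gradedSyzygies, finrank_map_add_finrank_inf_ker, finrank_homogeneousVectors,
    Finset.sum_const, Finset.card_univ, smul_eq_mul]

lemma hilbertFunction_span_range [Finite σ] {φ : ι → MvPolynomial σ k} {e : ℕ}
    (hφ : ∀ i, (φ i).IsHomogeneous e) (m : ℕ) :
    hilbertFunction (Ideal.span (Set.range φ)) (m + e) +
        Fintype.card ι * Module.finrank k (homogeneousSubmodule σ k m) =
      Module.finrank k (homogeneousSubmodule σ k (m + e)) +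
        Module.finrank k (gradedSyzygies φ m) := by
  have := finrank_gradedPiece_add_finrank_gradedSyzygies hφ m
  have := hilbertFunction_add_finrank_gradedPiece (Ideal.span (Set.range φ)) (m + e)
  omega

/-- The vectors `v j` generate the syzygies of the family `φ`, and the relations between them are
the multiples of `r ≠ 0`; over a domain, `0 → A → A^κ → A^ι → A` with maps given by `r`, `v` and
`φ` is then exact. -/
structure IsSyzygyResolution {A : Type*} [CommRing A] (φ : ι → A) (v : κ → ι → A) (r : κ → A) :
    Prop where
  generates (w : ι → A) : w ⬝ᵥ φ = 0 ↔ ∃ c : κ → A, ∑ j, c j • v j = w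
  relations (c : κ → A) : ∑ j, c j • v j = 0 ↔ ∃ t : A, t • r = c
  ne_zero : r ≠ 0

variable {φ : ι → MvPolynomial σ k} {v : κ → ι → MvPolynomial σ k} {r : κ → MvPolynomial σ k}
  {a m : ℕ} {b : κ → ℕ}

lemma IsSyzygyResolution.map_homogeneousVectors (h : IsSyzygyResolution φ v r)
    (hv : ∀ j i, (v j i).IsHomogeneous (b j)) (hb : ∀ j, b j ≤ m) :
    (homogeneousVectors k σ fun j => m - b j).map
        ((Fintype.linearCombination (MvPolynomial σ k) v).restrictScalars k) =
      gradedSyzygies φ m := by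
  ext w
  simp only [mem_gradedSyzygies, Submodule.mem_map, mem_homogeneousVectors, h.generates]
  constructor
  · rintro ⟨c, hc, rfl⟩
    refine ⟨fun i => ?_, c, rfl⟩
    simpa [Fintype.linearCombination_apply, dotProduct] using
      isHomogeneous_dotProduct (fun j => hv j i) hb hc
  · rintro ⟨hw, c, rfl⟩
    refine ⟨fun j => homogeneousComponent (m - b j) (c j),
      fun j => homogeneousComponent_isHomogeneous _ _, funext fun i => ?_⟩
    have hcomp := homogeneousComponent_dotProduct (fun j => hv j i) hb c
    simp only [Finset.sum_apply, Pi.smul_apply, smul_eq_mul] at hw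
    rw [dotProduct, homogeneousComponent_eq_self (hw i)] at hcomp
    simpa [Fintype.linearCombination_apply, dotProduct] using hcomp.symm

lemma IsSyzygyResolution.finrank_gradedSyzygies [Finite σ] (h : IsSyzygyResolution φ v r)
    (hv : ∀ j i, (v j i).IsHomogeneous (b j)) (hr : ∀ j, (r j).IsHomogeneous (a - b j))
    (hba : ∀ j, b j ≤ a) (ham : a ≤ m) :
    Module.finrank k (gradedSyzygies φ m) +
        Module.finrank k (homogeneousSubmodule σ k (m - a)) =
      ∑ j, Module.finrank k (homogeneousSubmodule σ k (m - b j)) := by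
  let combine := (Fintype.linearCombination (MvPolynomial σ k) v).restrictScalars k
  have hker : homogeneousVectors k σ (fun j => m - b j) ⊓ LinearMap.ker combine =
      (homogeneousSubmodule σ k (m - a)).map
        ((LinearMap.toSpanSingleton (MvPolynomial σ k) _ r).restrictScalars k) := by
    ext c
    have hdeg (j : κ) : m - b j = m - a + (a - b j) := by have := hba j; omega
    simp only [Submodule.mem_inf, mem_homogeneousVectors, Submodule.mem_map, hdeg]
    constructor
    · rintro ⟨hc, hc0⟩
      obtain ⟨t, rfl⟩ := (h.relations c).1 hc0
      obtain ⟨j, hj⟩ := Function.ne_iff.1 h.ne_zero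
      exact ⟨t, isHomogeneous_of_mul_right (hr j) (hc j) hj, rfl⟩
    · rintro ⟨t, ht, rfl⟩
      exact ⟨fun j => IsHomogeneous.mul ht (hr j), (h.relations _).2 ⟨t, rfl⟩⟩
  rw [← h.map_homogeneousVectors hv fun j => (hba j).trans ham,
    ← finrank_map_toSpanSingleton h.ne_zero, ← hker, finrank_map_add_finrank_inf_ker,
    finrank_homogeneousVectors]

end Syzygies

/-! ### Homogeneous prime avoidance and saturated ideals -/

section Saturated

variable {σ : Type*}

lemma exists_isHomogeneous_mem_of_finset {R : Type*} [CommRing R] (P : Ideal (MvPolynomial σ R))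
    [P.IsPrime] (s : Finset (Ideal (MvPolynomial σ R))) :
    ∃ n, ∃ g : MvPolynomial σ R, g.IsHomogeneous n ∧ g ∉ P ∧
      ∀ Q ∈ s, (∃ m, ∃ h ∈ Q, h.IsHomogeneous m ∧ h ∉ P) → g ∈ Q := by
  induction s using Finset.cons_induction with
  | empty =>
    exact ⟨0, 1, isHomogeneous_one σ R, P.one_notMem, fun Q hQ => absurd hQ (Finset.notMem_empty Q)⟩
  | cons Q s _ ih =>
    obtain ⟨n, g, hg, hgP, hgs⟩ := ih
    by_cases hQ : ∃ m, ∃ h ∈ Q, h.IsHomogeneous m ∧ h ∉ P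
    · obtain ⟨m, h, hhQ, hh, hhP⟩ := hQ
      refine ⟨m + n, h * g, hh.mul hg, Ideal.IsPrime.mul_notMem ‹_› hhP hgP, ?_⟩
      refine (Finset.forall_mem_cons _ _).2 ⟨fun _ => Q.mul_mem_right g hhQ, ?_⟩
      exact fun Q' hQ' hex => Q'.mul_mem_left h (hgs Q' hQ' hex)
    · exact ⟨n, g, hg, hgP, (Finset.forall_mem_cons _ _).2 ⟨fun hex => absurd hex hQ, hgs⟩⟩

lemma exists_isHomogeneous_notMem_of_finset {R : Type*} [CommRing R]
    (s : Finset (Ideal (MvPolynomial σ R))) (hs : ∀ P ∈ s, P.IsPrime ∧ ∃ i, X i ∉ P) :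
    ∃ n > 0, ∃ f : MvPolynomial σ R, f.IsHomogeneous n ∧ ∀ P ∈ s, f ∉ P := by
  induction s using Finset.cons_induction with
  | empty =>
    exact ⟨1, one_pos, 0, isHomogeneous_zero _ _ _, fun P hP => absurd hP (Finset.notMem_empty P)⟩
  | cons P s _ ih =>
    obtain ⟨⟨hP, i, hi⟩, hs⟩ := (Finset.forall_mem_cons _ _).1 hs
    obtain ⟨n, hn, f, hf, hfs⟩ := ih hs
    by_cases hfP : f ∈ P
    swap
    · exact ⟨n, hn, f, hf, (Finset.forall_mem_cons _ _).2 ⟨hfP, hfs⟩⟩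
    obtain ⟨m, g, hg, hgP, hgs⟩ := exists_isHomogeneous_mem_of_finset P s
    -- The powers only serve to equalize the degrees of `f` and of `X i * g`.
    let h := f ^ (1 + m) + (X i * g) ^ n
    have hhom : h.IsHomogeneous (n * (1 + m)) :=
      (hf.pow _).add (by simpa only [mul_comm] using ((isHomogeneous_X R i).mul hg).pow n)
    have hhP : h ∉ P := fun hmem => hP.mul_notMem hi hgP <| hP.mem_of_pow_mem n <|
      (P.add_mem_iff_right (P.pow_mem_of_mem hfP _ (by omega))).1 hmem
    refine ⟨_, by positivity, h, hhom, (Finset.forall_mem_cons _ _).2 ⟨hhP, fun Q hQ hhQ => ?_⟩⟩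
    have hgQ : X i * g ∈ Q := Q.mul_mem_left _ (hgs Q hQ ⟨_, h, hhQ, hhom, hhP⟩)
    exact hfs Q hQ <| (hs Q hQ).1.mem_of_pow_mem (1 + m) <|
      (Q.add_mem_iff_left (Q.pow_mem_of_mem hgQ n hn)).1 hhQ

/-- Saturation with respect to the irrelevant ideal: an element is in `I` as soon as all its
multiples by the variables are. -/
def IsSaturated {R : Type*} [CommRing R] (I : Ideal (MvPolynomial σ R)) : Prop :=
  ∀ f, (∀ i, X i * f ∈ I) → f ∈ I

variable {k : Type*} [Field k] [Finite σ] {I : Ideal (MvPolynomial σ k)}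

lemma IsSaturated.exists_isHomogeneous_regular (hI : IsSaturated I) :
    ∃ n > 0, ∃ f : MvPolynomial σ k, f.IsHomogeneous n ∧ ∀ g, f * g ∈ I → g ∈ I := by
  have hX : ∀ P ∈ associatedPrimes (MvPolynomial σ k) (MvPolynomial σ k ⧸ I),
      P.IsPrime ∧ ∃ i, X i ∉ P := by
    intro P hP
    obtain ⟨hPprime, x, rfl⟩ := isAssociatedPrime_iff.1 hP
    refine ⟨hPprime, ?_⟩
    by_contra! hall
    obtain ⟨g, rfl⟩ := Ideal.Quotient.mk_surjective x
    have hg : g ∈ I := hI g fun i => by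
      rw [← Ideal.Quotient.eq_zero_iff_mem, map_mul]
      exact Submodule.mem_colon_singleton.1 (hall i)
    refine hPprime.ne_top ((Ideal.eq_top_iff_one _).2 (Submodule.mem_colon_singleton.2 ?_))
    rw [Ideal.Quotient.eq_zero_iff_mem.2 hg, smul_zero]
    exact zero_mem _
  obtain ⟨n, hn, f, hf, hfP⟩ := exists_isHomogeneous_notMem_of_finset
    (associatedPrimes.finite (MvPolynomial σ k) (MvPolynomial σ k ⧸ I)).toFinset
    (by simpa only [Set.Finite.mem_toFinset] using hX)
  refine ⟨n, hn, f, hf, fun g hfg => by_contra fun hg => ?_⟩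
  have hzero : f ∈
      ⋃ P ∈ associatedPrimes (MvPolynomial σ k) (MvPolynomial σ k ⧸ I), (P : Set _) := by
    rw [biUnion_associatedPrimes_eq_zero_divisors]
    exact ⟨Ideal.Quotient.mk I g, mt Ideal.Quotient.eq_zero_iff_mem.1 hg,
      Ideal.Quotient.eq_zero_iff_mem.2 hfg⟩
  obtain ⟨P, hP, hfmem⟩ := Set.mem_iUnion₂.1 hzero
  exact hfP P ((Set.Finite.mem_toFinset _).2 hP) hfmem

lemma hilbertFunction_le_of_regular {f : MvPolynomial σ k} {n : ℕ} (hf : f.IsHomogeneous n)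
    (hreg : ∀ g, f * g ∈ I → g ∈ I) (m : ℕ) : hilbertFunction I m ≤ hilbertFunction I (m + n) := by
  let mulf := LinearMap.mulLeft k (Ideal.Quotient.mk I f)
  have hinj : Function.Injective mulf := by
    refine (injective_iff_map_eq_zero mulf).2 fun x hx => ?_
    obtain ⟨g, rfl⟩ := Ideal.Quotient.mk_surjective x
    exact Ideal.Quotient.eq_zero_iff_mem.2 (hreg g (Ideal.Quotient.eq_zero_iff_mem.1 hx))
  rw [hilbertFunction, (Submodule.equivMapOfInjective mulf hinj _).finrank_eq]
  refine Submodule.finrank_mono ?_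
  rintro _ ⟨_, ⟨g, hg, rfl⟩, rfl⟩
  exact ⟨g * f, IsHomogeneous.mul hg hf, by simp [mulf, mul_comm]⟩

lemma IsSaturated.hilbertFunction_le (hI : IsSaturated I) {c : ℕ}
    (hc : ∀ᶠ m in atTop, hilbertFunction I m = c) (m : ℕ) : hilbertFunction I m ≤ c := by
  obtain ⟨n, hn, f, hf, hreg⟩ := hI.exists_isHomogeneous_regular
  have hmono : Monotone fun j => hilbertFunction I (m + j * n) := by
    refine monotone_nat_of_le_succ fun j => ?_
    simpa only [Nat.succ_mul, ← add_assoc] using hilbertFunction_le_of_regular hf hreg (m + j * n)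
  obtain ⟨N, hN⟩ := eventually_atTop.1 hc
  calc hilbertFunction I m = hilbertFunction I (m + 0 * n) := by rw [zero_mul, add_zero]
    _ ≤ hilbertFunction I (m + N * n) := hmono (Nat.zero_le N)
    _ = c := hN _ (le_add_left (Nat.le_mul_of_pos_right N hn))

end Saturated

/-! ### Primitive vectors and the cross product -/

section PrimitiveVectors

open scoped Matrix

variable {A ι : Type*} [CommRing A]

/-- A vector whose entries have only units as common divisors. -/
def IsPrimitiveVector (x : ι → A) : Prop := ∀ p, (∀ i, p ∣ x i) → IsUnit p

lemma IsPrimitiveVector.ne_zero [Nontrivial A] {x : ι → A} (hx : IsPrimitiveVector x) : x ≠ 0 := by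
  rintro rfl
  exact not_isUnit_zero (hx 0 fun _ => dvd_rfl)

lemma smul_eq_smul_of_cross_eq_zero {x y : Fin 3 → A} (h : x ⨯₃ y = 0) (i : Fin 3) :
    y i • x = x i • y := by
  have := cross_cross_eq_smul_sub_smul' (Pi.single i 1) x y
  rw [h, map_zero, single_one_dotProduct, dotProduct_single_one] at this
  exact (sub_eq_zero.1 this.symm)

variable [IsDomain A] [UniqueFactorizationMonoid A]

lemma IsPrimitiveVector.dvd_of_forall_dvd_mul {x : ι → A} (hx : IsPrimitiveVector x) {a : A}
    (ha : a ≠ 0) {b : A} (h : ∀ i, a ∣ x i * b) : a ∣ b := by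
  induction a using UniqueFactorizationMonoid.induction_on_prime generalizing b with
  | h₁ => exact absurd rfl ha
  | h₂ u hu => exact hu.dvd
  | h₃ a p ha₀ hp ih =>
    obtain ⟨i, hi⟩ : ∃ i, ¬p ∣ x i := by
      by_contra! hdvd
      exact hp.not_isUnit (hx p hdvd)
    obtain ⟨b, rfl⟩ := (hp.dvd_or_dvd ((dvd_mul_right p a).trans (h i))).resolve_left hi
    refine mul_dvd_mul_left p (ih ha₀ fun j => ?_)
    have hj := h j
    rwa [mul_left_comm, mul_dvd_mul_iff_left hp.ne_zero] at hj

lemma IsPrimitiveVector.exists_eq_smul_of_cross_eq_zero {x y : Fin 3 → A}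
    (hx : IsPrimitiveVector x) (h : x ⨯₃ y = 0) : ∃ t : A, y = t • x := by
  have hprop := smul_eq_smul_of_cross_eq_zero h
  obtain ⟨i, hi⟩ := Function.ne_iff.1 hx.ne_zero
  obtain ⟨t, ht⟩ := hx.dvd_of_forall_dvd_mul hi (b := y i) fun j =>
    ⟨y j, by simpa [mul_comm] using congrFun (hprop i) j⟩
  refine ⟨t, smul_right_injective _ hi ?_⟩
  simp only [← hprop i, ht, smul_smul]

lemma IsPrimitiveVector.exists_cross_eq_smul {φ u v : Fin 3 → A} (hφ : IsPrimitiveVector φ)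
    (hu : u ⬝ᵥ φ = 0) (hv : v ⬝ᵥ φ = 0) : ∃ t : A, u ⨯₃ v = t • φ := by
  refine hφ.exists_eq_smul_of_cross_eq_zero ?_
  rw [cross_cross_eq_smul_sub_smul', dotProduct_comm φ v, hv, hu, zero_smul, zero_smul, sub_zero]

lemma exists_eq_mul_of_isRelPrime {f g a b : A} (hf : f ≠ 0) (hfg : IsRelPrime f g)
    (h : a * f + b * g = 0) : ∃ t, a = -(t * g) ∧ b = t * f := by
  obtain ⟨t, rfl⟩ := hfg.dvd_of_dvd_mul_right (show f ∣ b * g from ⟨-a, by linear_combination h⟩)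
  exact ⟨t, mul_left_cancel₀ hf (by linear_combination h), mul_comm f t⟩

end PrimitiveVectors

/-! ### The Bourbaki ideal of a syzygy -/

section Bourbaki

open scoped Matrix

section General

variable {A : Type*} [CommRing A]

/-- The ideal of all `t` such that `t φ = u ⨯₃ v` for some `v`. For a primitive syzygy `u` of a
primitive vector `φ` with syzygy module `N`, the cross product with `u` identifies `N / A u` with
this ideal, so that it is the Bourbaki ideal of the section `u` of the sheaf of relations. -/
noncomputable def bourbakiIdeal (φ u : Fin 3 → A) : Ideal A :=
  (LinearMap.range (crossProduct u)).comap (LinearMap.toSpanSingleton A _ φ)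

variable {φ u : Fin 3 → A}

lemma mem_bourbakiIdeal {t : A} : t ∈ bourbakiIdeal φ u ↔ ∃ v, u ⨯₃ v = t • φ := Iff.rfl

lemma cross_cross_eq_smul_of_dotProduct_eq_zero (hu : u ⬝ᵥ φ = 0) (w : Fin 3 → A) :
    u ⨯₃ (φ ⨯₃ w) = (u ⬝ᵥ w) • φ := by
  rw [cross_cross_eq_smul_sub_smul', dotProduct_comm φ u, hu, zero_smul, sub_zero]

lemma apply_mem_bourbakiIdeal (hu : u ⬝ᵥ φ = 0) (i : Fin 3) : u i ∈ bourbakiIdeal φ u :=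
  ⟨φ ⨯₃ Pi.single i 1, by
    rw [cross_cross_eq_smul_of_dotProduct_eq_zero hu, dotProduct_single_one]; rfl⟩

lemma dotProduct_eq_zero_of_cross_eq_smul [IsDomain A] {v : Fin 3 → A} {t : A} (ht : t ≠ 0)
    (h : u ⨯₃ v = t • φ) : v ⬝ᵥ φ = 0 := by
  have := dot_cross_self u v
  rw [h, dotProduct_smul, smul_eq_mul] at this
  exact (mul_eq_zero.1 this).resolve_left ht

/-- A Čech-style argument: `y a - x b = s u` and its cyclic analogues give `z s ∈ (x, y)`, so that
`a` can be corrected by a multiple of `u` to become divisible by `x`. -/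
lemma mem_bourbakiIdeal_of_mul_mem [IsDomain A] [UniqueFactorizationMonoid A]
    (hu : IsPrimitiveVector u) {x y z t : A} (hx0 : x ≠ 0) (hxy : IsRelPrime x y)
    (hz : ∀ s, z * s ∈ Ideal.span {x, y} → s ∈ Ideal.span {x, y})
    (hx : x * t ∈ bourbakiIdeal φ u) (hy : y * t ∈ bourbakiIdeal φ u)
    (hzt : z * t ∈ bourbakiIdeal φ u) : t ∈ bourbakiIdeal φ u := by
  obtain ⟨a, ha⟩ := hx
  obtain ⟨b, hb⟩ := hy
  obtain ⟨c, hc⟩ := hzt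
  simp only [LinearMap.toSpanSingleton_apply] at ha hb hc
  have hprop {x y : A} {a b : Fin 3 → A} (ha : u ⨯₃ a = (x * t) • φ) (hb : u ⨯₃ b = (y * t) • φ) :
      ∃ s : A, y • a - x • b = s • u := by
    refine hu.exists_eq_smul_of_cross_eq_zero ?_
    rw [map_sub, map_smul, map_smul, ha, hb]
    module
  obtain ⟨s, hs⟩ := hprop ha hb
  obtain ⟨s₁, hs₁⟩ := hprop hb hc
  obtain ⟨s₂, hs₂⟩ := hprop hc ha
  have hcycle : (z * s + x * s₁ + y * s₂) • u = 0 :=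
    calc (z * s + x * s₁ + y * s₂) • u
        = z • s • u + x • s₁ • u + y • s₂ • u := by module
      _ = 0 := by rw [← hs, ← hs₁, ← hs₂]; module
  have hzs := (smul_eq_zero.1 hcycle).resolve_right hu.ne_zero
  obtain ⟨α, β, hαβ⟩ := Ideal.mem_span_pair.1
    (hz s (Ideal.mem_span_pair.2 ⟨-s₁, -s₂, by linear_combination -hzs⟩))
  have hdvd (i : Fin 3) : x ∣ (a - β • u) i := by
    refine hxy.dvd_of_dvd_mul_left ⟨(b + α • u) i, ?_⟩
    have hi := congrFun hs i
    simp only [Pi.sub_apply, Pi.add_apply, Pi.smul_apply, smul_eq_mul, ← hαβ] at hi ⊢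
    linear_combination hi
  choose v hv using hdvd
  refine ⟨v, smul_right_injective _ hx0 ?_⟩
  have hxv : x • v = a - β • u := (funext hv).symm
  calc x • u ⨯₃ v = u ⨯₃ (a - β • u) := by rw [← map_smul, hxv]
    _ = (x * t) • φ := by rw [map_sub, map_smul, cross_self, smul_zero, sub_zero, ha]
    _ = x • t • φ := mul_smul x t φ

end General

section Graded

variable {k : Type*} [Field k] {φ u : Fin 3 → MvPolynomial (Fin 3) k} {e r m n p : ℕ}

lemma isSaturated_bourbakiIdeal (hu : IsPrimitiveVector u) : IsSaturated (bourbakiIdeal φ u) := by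
  refine fun f hf => mem_bourbakiIdeal_of_mul_mem hu (X_ne_zero 0) (isRelPrime_X_X (by decide))
    (fun s hs => ?_) (hf 0) (hf 1) (hf 2)
  rw [← Set.image_pair] at hs ⊢
  exact mem_span_X_image_of_X_mul_mem (by decide) hs

lemma exists_mem_gradedSyzygies_cross_eq_smul (hφ : ∀ i, (φ i).IsHomogeneous e)
    (hu : ∀ i, (u i).IsHomogeneous r) (hdeg : n + e = m + r) {t : MvPolynomial (Fin 3) k}
    (ht : t.IsHomogeneous n) (htJ : t ∈ bourbakiIdeal φ u) :
    ∃ v ∈ gradedSyzygies φ m, u ⨯₃ v = t • φ := by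
  obtain rfl | ht0 := eq_or_ne t 0
  · exact ⟨0, zero_mem _, by rw [map_zero, zero_smul]⟩
  obtain ⟨w, hw⟩ := mem_bourbakiIdeal.1 htJ
  have hcross : (u ⨯₃ fun j => homogeneousComponent m (w j)) = t • φ := funext fun i => by
    rw [← homogeneousComponent_cross hu, hw, ← hdeg]
    exact homogeneousComponent_eq_self (ht.mul (hφ i))
  exact ⟨_, mem_gradedSyzygies.2 ⟨fun j => homogeneousComponent_isHomogeneous m (w j),
    dotProduct_eq_zero_of_cross_eq_smul ht0 hcross⟩, hcross⟩

lemma map_gradedSyzygies_cross (hφ : ∀ i, (φ i).IsHomogeneous e) (hφp : IsPrimitiveVector φ)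
    (hu : u ∈ gradedSyzygies φ r) (hdeg : n + e = m + r) :
    (gradedSyzygies φ m).map ((crossProduct u).restrictScalars k) =
      (gradedPiece (bourbakiIdeal φ u) n).map
        ((LinearMap.toSpanSingleton (MvPolynomial (Fin 3) k) _ φ).restrictScalars k) := by
  obtain ⟨huh, hu0⟩ := mem_gradedSyzygies.1 hu
  refine le_antisymm ?_ ?_
  · rintro _ ⟨v, hv, rfl⟩
    obtain ⟨hvh, hv0⟩ := mem_gradedSyzygies.1 hv
    obtain ⟨t, ht⟩ := hφp.exists_cross_eq_smul hu0 hv0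
    obtain ⟨i, hi⟩ := Function.ne_iff.1 hφp.ne_zero
    refine ⟨t, ⟨isHomogeneous_of_mul_right (hφ i) ?_ hi, v, ht⟩, ht.symm⟩
    rw [hdeg, add_comm, ← smul_eq_mul, ← Pi.smul_apply, ← ht]
    exact isHomogeneous_cross huh hvh i
  · rintro _ ⟨t, ⟨hth, htJ⟩, rfl⟩
    obtain ⟨v, hv, ht⟩ := exists_mem_gradedSyzygies_cross_eq_smul hφ huh hdeg hth htJ
    exact ⟨v, hv, ht⟩

lemma gradedSyzygies_inf_ker_cross (hup : IsPrimitiveVector u) (hu : u ∈ gradedSyzygies φ r) :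
    gradedSyzygies φ (p + r) ⊓ LinearMap.ker ((crossProduct u).restrictScalars k) =
      (homogeneousSubmodule (Fin 3) k p).map
        ((LinearMap.toSpanSingleton (MvPolynomial (Fin 3) k) _ u).restrictScalars k) := by
  obtain ⟨huh, hu0⟩ := mem_gradedSyzygies.1 hu
  refine le_antisymm ?_ ?_
  · rintro v ⟨hv, hcross⟩
    obtain ⟨t, rfl⟩ := hup.exists_eq_smul_of_cross_eq_zero hcross
    obtain ⟨i, hi⟩ := Function.ne_iff.1 hup.ne_zero
    exact ⟨t, isHomogeneous_of_mul_right (huh i) ((mem_gradedSyzygies.1 hv).1 i) hi, rfl⟩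
  · rintro _ ⟨t, ht, rfl⟩
    refine ⟨mem_gradedSyzygies.2 ⟨fun i => IsHomogeneous.mul ht (huh i), ?_⟩, ?_⟩
    · exact (smul_dotProduct t u φ).trans (by rw [hu0, smul_zero])
    · exact (map_smul (crossProduct u) t u).trans (by rw [cross_self, smul_zero])

lemma finrank_gradedSyzygies (hφ : ∀ i, (φ i).IsHomogeneous e) (hφp : IsPrimitiveVector φ)
    (hup : IsPrimitiveVector u) (hu : u ∈ gradedSyzygies φ r) (hdeg : n + e = p + 2 * r) :
    Module.finrank k (gradedSyzygies φ (p + r)) =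
      Module.finrank k (gradedPiece (bourbakiIdeal φ u) n) +
        Module.finrank k (homogeneousSubmodule (Fin 3) k p) := by
  rw [← finrank_map_add_finrank_inf_ker ((crossProduct u).restrictScalars k),
    map_gradedSyzygies_cross hφ hφp hu (by omega : n + e = p + r + r),
    gradedSyzygies_inf_ker_cross hup hu, finrank_map_toSpanSingleton hφp.ne_zero,
    finrank_map_toSpanSingleton hup.ne_zero]

lemma hilbertFunction_add_hilbertFunction_bourbakiIdeal (hφ : ∀ i, (φ i).IsHomogeneous e)
    (hφp : IsPrimitiveVector φ) (hup : IsPrimitiveVector u) (hu : u ∈ gradedSyzygies φ r)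
    (hdeg : n + e = p + 2 * r) :
    hilbertFunction (Ideal.span (Set.range φ)) (p + r + e) +
        hilbertFunction (bourbakiIdeal φ u) n + r * e = e ^ 2 + r ^ 2 := by
  have hI := hilbertFunction_span_range hφ (p + r)
  have hJ := hilbertFunction_add_finrank_gradedPiece (bourbakiIdeal φ u) n
  rw [finrank_gradedSyzygies hφ hφp hup hu hdeg, Fintype.card_fin] at hI
  have h₀ := two_mul_finrank_homogeneousSubmodule_fin_three (k := k) p
  have h₁ := two_mul_finrank_homogeneousSubmodule_fin_three (k := k) (p + r)
  have h₂ := two_mul_finrank_homogeneousSubmodule_fin_three (k := k) (p + r + e)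
  have h₃ := two_mul_finrank_homogeneousSubmodule_fin_three (k := k) n
  zify at *
  have hn : (n : ℤ) = p + 2 * r - e := by omega
  rw [hn] at h₃
  refine mul_left_cancel₀ (two_ne_zero' ℤ) ?_
  linear_combination 2 * hI + 2 * hJ + h₀ - 3 * h₁ + h₂ + h₃

lemma gradedPiece_bourbakiIdeal_eq_bot (hφ : ∀ i, (φ i).IsHomogeneous e) (hφ0 : φ ≠ 0)
    (hu : ∀ i, (u i).IsHomogeneous r) (hdeg : n + e = m + r) (hm : gradedSyzygies φ m = ⊥) :
    gradedPiece (bourbakiIdeal φ u) n = ⊥ := by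
  refine (Submodule.eq_bot_iff _).2 fun t ht => ?_
  obtain ⟨v, hv, hvt⟩ := exists_mem_gradedSyzygies_cross_eq_smul hφ hu hdeg ht.1 ht.2
  rw [(Submodule.eq_bot_iff _).1 hm v hv, map_zero] at hvt
  exact (smul_eq_zero.1 hvt.symm).resolve_right hφ0

end Graded

end Bourbaki

/-! ### Syzygies of minimal degree -/

section MinimalSyzygy

open scoped Matrix

variable {k : Type*} [Field k]

section General

variable {σ ι : Type*} [Fintype ι]

lemma isUnit_of_isHomogeneous_zero {f : MvPolynomial σ k} (hf : f.IsHomogeneous 0) (hf0 : f ≠ 0) :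
    IsUnit f := by
  have hC : f = C (f.coeff 0) := by
    rw [← homogeneousComponent_zero, homogeneousComponent_eq_self hf]
  rw [hC] at hf0 ⊢
  exact (isUnit_iff_ne_zero.2 fun h => hf0 (by rw [h, C_0])).map C

lemma isPrimitiveVector_of_forall_lt_gradedSyzygies_eq_bot {φ u : ι → MvPolynomial σ k} {r : ℕ}
    (hu : u ∈ gradedSyzygies φ r) (hu0 : u ≠ 0) (hmin : ∀ m < r, gradedSyzygies φ m = ⊥) :
    IsPrimitiveVector u := by
  intro p hp
  choose w hw using hp
  obtain rfl : u = p • w := funext hw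
  obtain ⟨huh, huφ⟩ := mem_gradedSyzygies.1 hu
  obtain ⟨hp0, hw0⟩ := smul_ne_zero_iff.1 hu0
  obtain ⟨i, hi⟩ := Function.ne_iff.1 hu0
  obtain ⟨a, b, hab, hpa, -⟩ := exists_isHomogeneous_of_mul (huh i) hi
  have hwb : w ∈ gradedSyzygies φ b := by
    refine mem_gradedSyzygies.2 ⟨fun j => isHomogeneous_of_mul_right hpa ?_ hp0, ?_⟩
    · rw [mul_comm, add_comm, hab]
      exact huh j
    · exact (smul_eq_zero.1 ((smul_dotProduct p w φ).symm.trans huφ)).resolve_left hp0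
  obtain rfl | ha := a.eq_zero_or_pos
  · exact isUnit_of_isHomogeneous_zero hpa hp0
  · exact absurd ((Submodule.eq_bot_iff _).1 (hmin b (by omega)) w hwb) hw0

lemma exists_isPrimitiveVector_mem_gradedSyzygies {φ : ι → MvPolynomial σ k} {n : ℕ}
    (hn : gradedSyzygies φ n ≠ ⊥) :
    ∃ r ≤ n, ∃ u ∈ gradedSyzygies φ r, IsPrimitiveVector u ∧
      ∀ m < r, gradedSyzygies φ m = ⊥ := by
  classical
  have hex : ∃ m, gradedSyzygies φ m ≠ ⊥ := ⟨n, hn⟩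
  let r := Nat.find hex
  have hmin (m : ℕ) (hm : m < r) : gradedSyzygies φ m = ⊥ := not_not.1 (Nat.find_min _ hm)
  obtain ⟨u, hu, hu0⟩ := Submodule.exists_mem_ne_zero_of_ne_bot (Nat.find_spec hex)
  exact ⟨r, Nat.find_min' _ hn, u, hu,
    isPrimitiveVector_of_forall_lt_gradedSyzygies_eq_bot hu hu0 hmin, hmin⟩

end General

variable {φ u : Fin 3 → MvPolynomial (Fin 3) k} {e r : ℕ}

lemma cross_single_mem_gradedSyzygies (hφ : ∀ i, (φ i).IsHomogeneous e) (i : Fin 3) :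
    φ ⨯₃ Pi.single i 1 ∈ gradedSyzygies φ e := by
  refine mem_gradedSyzygies.2 ⟨isHomogeneous_cross hφ (isHomogeneous_single_one i), ?_⟩
  rw [dotProduct_comm, dot_self_cross]

lemma gradedSyzygies_ne_bot (hφ : ∀ i, (φ i).IsHomogeneous e) (hφ0 : φ ≠ 0) :
    gradedSyzygies φ e ≠ ⊥ := by
  intro hbot
  have hsingle (j : Fin 3) : φ = φ j • Pi.single j 1 := by
    have hcross := (Submodule.eq_bot_iff _).1 hbot _ (cross_single_mem_gradedSyzygies hφ j)
    simpa using smul_eq_smul_of_cross_eq_zero hcross j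
  obtain ⟨i, hi⟩ := Function.ne_iff.1 hφ0
  obtain ⟨j, hj⟩ := exists_ne i
  exact hi (by rw [hsingle j]; simp [hj.symm])

lemma eventually_hilbertFunction_bourbakiIdeal (hφ : ∀ i, (φ i).IsHomogeneous e)
    (hφp : IsPrimitiveVector φ) (hup : IsPrimitiveVector u) (hu : u ∈ gradedSyzygies φ r)
    (hI : ∀ᶠ m in atTop, hilbertFunction (Ideal.span (Set.range φ)) m + e = e ^ 2) :
    ∀ᶠ n in atTop, hilbertFunction (bourbakiIdeal φ u) n + r * e = e + r ^ 2 := by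
  obtain ⟨N, hN⟩ := eventually_atTop.1 hI
  filter_upwards [eventually_ge_atTop (N + 2 * r)] with n hn
  have hsum := hilbertFunction_add_hilbertFunction_bourbakiIdeal hφ hφp hup hu
    (show n + e = n + e - 2 * r + 2 * r by omega)
  have hIm := hN (n + e - 2 * r + r + e) (by omega)
  omega

lemma hilbertFunction_top {σ : Type*} (n : ℕ) :
    hilbertFunction (⊤ : Ideal (MvPolynomial σ k)) n = 0 :=
  Module.finrank_zero_of_subsingleton

lemma mul_le_two_mul_hilbertFunction_bourbakiIdeal (hφ : ∀ i, (φ i).IsHomogeneous e) (hφ0 : φ ≠ 0)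
    (hup : IsPrimitiveVector u) (hu : ∀ i, (u i).IsHomogeneous r)
    (hmin : ∀ m < r, gradedSyzygies φ m = ⊥) {c s : ℕ} (hs : s + 1 + e = 2 * r)
    (hc : ∀ᶠ n in atTop, hilbertFunction (bourbakiIdeal φ u) n = c) :
    (s + 1) * (s + 2) ≤ 2 * c := by
  have hbot : gradedPiece (bourbakiIdeal φ u) s = ⊥ :=
    gradedPiece_bourbakiIdeal_eq_bot hφ hφ0 hu (show s + e = r - 1 + r by omega)
      (hmin (r - 1) (by omega))
  have hfull := hilbertFunction_add_finrank_gradedPiece (bourbakiIdeal φ u) s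
  rw [hbot, finrank_bot, add_zero] at hfull
  rw [← two_mul_finrank_homogeneousSubmodule_fin_three (k := k), ← hfull]
  exact Nat.mul_le_mul_left 2 ((isSaturated_bourbakiIdeal hup).hilbertFunction_le hc s)

/-- The values `r = e - 1` and `r = e` are excluded because there are no syzygies below degree `r`:
the Bourbaki ideal, although saturated, misses too many forms of small degree. -/
lemma eq_one_of_eventually_hilbertFunction (he : 5 ≤ e) (hφ : ∀ i, (φ i).IsHomogeneous e)
    (hφp : IsPrimitiveVector φ) (hup : IsPrimitiveVector u) (hu : u ∈ gradedSyzygies φ r)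
    (hmin : ∀ m < r, gradedSyzygies φ m = ⊥) (hre : r ≤ e)
    (hI : ∀ᶠ m in atTop, hilbertFunction (Ideal.span (Set.range φ)) m + e = e ^ 2) : r = 1 := by
  have hJ := eventually_hilbertFunction_bourbakiIdeal hφ hφp hup hu hI
  obtain ⟨n, hn⟩ := hJ.exists
  have hconst : ∀ᶠ m in atTop, hilbertFunction (bourbakiIdeal φ u) m =
      hilbertFunction (bourbakiIdeal φ u) n := hJ.mono fun m hm => by omega
  have hr0 : r ≠ 0 := by
    rintro rfl
    obtain ⟨huh, huφ⟩ := mem_gradedSyzygies.1 hu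
    obtain ⟨i, hi⟩ := Function.ne_iff.1 hup.ne_zero
    have htop := Ideal.eq_top_of_isUnit_mem _ (apply_mem_bourbakiIdeal huφ i)
      (isUnit_of_isHomogeneous_zero (huh i) hi)
    rw [htop, hilbertFunction_top] at hn
    omega
  have hlarge {s : ℕ} (hs : s + 1 + e = 2 * r) :
      (s + 1) * (s + 2) ≤ 2 * hilbertFunction (bourbakiIdeal φ u) n :=
    mul_le_two_mul_hilbertFunction_bourbakiIdeal hφ hφp.ne_zero hup (mem_gradedSyzygies.1 hu).1
      hmin hs hconst
  by_contra hr1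
  obtain hr | rfl | rfl : r + 2 ≤ e ∨ e = r + 1 ∨ e = r := by omega
  · obtain ⟨a, rfl⟩ := Nat.exists_eq_add_of_le hr
    obtain ⟨b, rfl⟩ := Nat.exists_eq_add_of_le (show 2 ≤ r by omega)
    nlinarith
  · obtain ⟨s, rfl⟩ := Nat.exists_eq_add_of_le (show 2 ≤ r by omega)
    have := hlarge (s := s) (by omega)
    nlinarith
  · obtain ⟨s, rfl⟩ := Nat.exists_eq_add_of_le (show 1 ≤ e by omega)
    have := hlarge (s := s) (by omega)
    nlinarith

end MinimalSyzygy

/-! ### Linear forms and points -/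

section LinearForms

open scoped Matrix

variable {k : Type*} [Field k]

section General

variable {σ ι : Type*}

lemma irreducible_of_isHomogeneous_one {f : MvPolynomial σ k} (hf : f.IsHomogeneous 1)
    (hf0 : f ≠ 0) : Irreducible f := by
  refine ⟨not_isUnit_of_isHomogeneous hf one_ne_zero, ?_⟩
  rintro a b rfl
  obtain ⟨i, j, hij, ha, hb⟩ := exists_isHomogeneous_of_mul hf hf0
  obtain ⟨rfl, -⟩ | ⟨-, rfl⟩ := Nat.add_eq_one_iff.1 hij
  · exact .inl (isUnit_of_isHomogeneous_zero ha (left_ne_zero_of_mul hf0))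
  · exact .inr (isUnit_of_isHomogeneous_zero hb (right_ne_zero_of_mul hf0))

lemma IsPrimitiveVector.exists_isRelPrime {u : ι → MvPolynomial σ k} (hup : IsPrimitiveVector u)
    (hu : ∀ i, (u i).IsHomogeneous 1) : ∃ i j, u i ≠ 0 ∧ IsRelPrime (u i) (u j) := by
  obtain ⟨i, hi⟩ := Function.ne_iff.1 hup.ne_zero
  have hirr := irreducible_of_isHomogeneous_one (hu i) hi
  obtain ⟨j, hj⟩ : ∃ j, ¬u i ∣ u j := by
    by_contra! hdvd
    exact hirr.not_isUnit (hup _ hdvd)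
  exact ⟨i, j, hi, hirr.isRelPrime_iff_not_dvd.2 hj⟩

lemma linearIndependent_pair_of_isRelPrime {p q : MvPolynomial σ k} (hp : p.IsHomogeneous 1)
    (hq : q.IsHomogeneous 1) (hpq : IsRelPrime p q) : LinearIndependent k ![p, q] := by
  have hcoeff {p q : MvPolynomial σ k} (hq : q.IsHomogeneous 1) (hpq : IsRelPrime p q) {s t : k}
      (h : s • p + t • q = 0) : s = 0 := by
    by_contra hs
    have hdvd : q ∣ p := ⟨C (-(s⁻¹ * t)), by
      rw [mul_comm, C_mul', neg_smul, mul_smul, ← smul_neg, ← eq_neg_of_add_eq_zero_left h,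
        inv_smul_smul₀ hs]⟩
    exact not_isUnit_of_isHomogeneous hq one_ne_zero (hpq hdvd dvd_rfl)
  exact LinearIndependent.pair_iff.2 fun s t h =>
    ⟨hcoeff hq hpq h, hcoeff hp hpq.symm ((add_comm _ _).trans h)⟩

lemma aeval_smul_of_isHomogeneous {R A : Type*} [CommRing R] [CommRing A] [Algebra R A]
    {f : MvPolynomial σ R} {n : ℕ} (hf : f.IsHomogeneous n) (c : σ → R) (x : A) :
    aeval (fun i => c i • x) f = eval c f • x ^ n := by
  rw [aeval_def, eval₂_eq, eval_eq, Finset.sum_smul]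
  refine Finset.sum_congr rfl fun d hd => ?_
  simp only [smul_pow, Finset.prod_smul, Finset.prod_pow_eq_pow_sum, ← Algebra.smul_def, mul_smul]
  rw [hf.degree_eq_sum_deg_support hd]

variable [Finite σ] {J K : Ideal (MvPolynomial σ k)}

lemma exists_forall_mk_eq_eval_smul_pow (hK : hilbertFunction K 1 ≤ 1) :
    ∃ (c : σ → k) (x : MvPolynomial σ k ⧸ K), ∀ {n f}, f.IsHomogeneous n →
      Ideal.Quotient.mk K f = eval c f • x ^ n := by
  obtain ⟨x, hx⟩ := finrank_le_one_iff.1 hK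
  choose c hc using fun i => hx ⟨_, Submodule.mem_map_of_mem (isHomogeneous_X k i)⟩
  refine ⟨c, x, fun {n f} hf => ?_⟩
  rw [← aeval_smul_of_isHomogeneous hf]
  have hX (i : σ) : c i • (x : MvPolynomial σ k ⧸ K) = Ideal.Quotient.mkₐ k K (X i) :=
    congrArg Subtype.val (hc i)
  simp only [hX]
  rw [← comp_aeval_apply, aeval_X_left_apply]
  rfl

/-- The Hilbert function bound says that `K` defines at most one point. -/
lemma mem_of_mem_of_hilbertFunction_le_one (hK : hilbertFunction K 1 ≤ 1) (hKJ : K ≤ J)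
    (hJ : ∃ᶠ m in atTop, hilbertFunction J m ≠ 0) {t : MvPolynomial σ k} {n : ℕ}
    (ht : t.IsHomogeneous n) (htJ : t ∈ J) : t ∈ K := by
  obtain ⟨c, x, hcx⟩ := exists_forall_mk_eq_eval_smul_pow hK
  by_contra htK
  have hct : eval c t ≠ 0 := by
    intro h
    rw [← Ideal.Quotient.eq_zero_iff_mem, hcx ht, h, zero_smul] at htK
    exact htK rfl
  obtain ⟨m, hm, hnm⟩ := (hJ.and_eventually (eventually_ge_atTop n)).exists
  obtain ⟨y, rfl⟩ := Ideal.Quotient.mk_surjective x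
  have hmem (f : MvPolynomial σ k) (hf : f.IsHomogeneous m) : f ∈ J := by
    have hft : f - C (eval c f / eval c t) * (t * y ^ (m - n)) ∈ K := by
      rw [← Ideal.Quotient.eq_zero_iff_mem, map_sub, map_mul, map_mul, map_pow, hcx hf, hcx ht,
        smul_mul_assoc, ← pow_add, Nat.add_sub_cancel' hnm, ← algebraMap_eq,
        Ideal.Quotient.mk_algebraMap, ← Algebra.smul_def, smul_smul, div_mul_cancel₀ _ hct,
        sub_self]
    exact (J.sub_mem_iff_left (J.mul_mem_left _ (J.mul_mem_right _ htJ))).1 (hKJ hft)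
  refine hm (Submodule.finrank_eq_zero.2 ((Submodule.eq_bot_iff _).2 ?_))
  rintro _ ⟨f, hf, rfl⟩
  exact Ideal.Quotient.eq_zero_iff_mem.2 (hmem f hf)

lemma hilbertFunction_span_pair_one_le {p q : MvPolynomial (Fin 3) k} (hp : p.IsHomogeneous 1)
    (hq : q.IsHomogeneous 1) (hpq : IsRelPrime p q) :
    hilbertFunction (Ideal.span {p, q}) 1 ≤ 1 := by
  have hle : Submodule.span k (Set.range ![p, q]) ≤ gradedPiece (Ideal.span {p, q}) 1 := by
    rw [Submodule.span_le, Set.range_subset_iff, Fin.forall_fin_two]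
    exact ⟨⟨hp, Ideal.subset_span (.inl rfl)⟩, ⟨hq, Ideal.subset_span (.inr rfl)⟩⟩
  have htwo := Submodule.finrank_mono hle
  rw [finrank_span_eq_card (linearIndependent_pair_of_isRelPrime hp hq hpq),
    Fintype.card_fin] at htwo
  have hone := two_mul_finrank_homogeneousSubmodule_fin_three (k := k) 1
  have := hilbertFunction_add_finrank_gradedPiece (Ideal.span {p, q}) 1
  omega

end General

variable {φ u : Fin 3 → MvPolynomial (Fin 3) k} {e r : ℕ}

lemma homogeneousComponent_mem_bourbakiIdeal (hφ : ∀ i, (φ i).IsHomogeneous e)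
    (hu : ∀ i, (u i).IsHomogeneous r) (hre : r ≤ e) {t : MvPolynomial (Fin 3) k}
    (ht : t ∈ bourbakiIdeal φ u) (n : ℕ) : homogeneousComponent n t ∈ bourbakiIdeal φ u := by
  obtain ⟨v, hv⟩ := mem_bourbakiIdeal.1 ht
  refine mem_bourbakiIdeal.2 ⟨fun j => homogeneousComponent (n + e - r) (v j), funext fun i => ?_⟩
  rw [← homogeneousComponent_cross hu, hv, Nat.sub_add_cancel (by omega)]
  exact homogeneousComponent_mul_of_isHomogeneous t n (hφ i)

lemma bourbakiIdeal_eq_span_pair (hφ : ∀ i, (φ i).IsHomogeneous e) (he : e ≠ 0)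
    (hu : u ∈ gradedSyzygies φ 1) {i j : Fin 3} (hij : IsRelPrime (u i) (u j))
    (hJ : ∃ᶠ n in atTop, hilbertFunction (bourbakiIdeal φ u) n ≠ 0) :
    bourbakiIdeal φ u = Ideal.span {u i, u j} := by
  obtain ⟨huh, huφ⟩ := mem_gradedSyzygies.1 hu
  have hle : Ideal.span {u i, u j} ≤ bourbakiIdeal φ u := Ideal.span_le.2 <|
    Set.pair_subset (apply_mem_bourbakiIdeal huφ i) (apply_mem_bourbakiIdeal huφ j)
  refine le_antisymm (fun t ht => ?_) hle
  rw [← sum_homogeneousComponent t]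
  exact sum_mem fun n _ => mem_of_mem_of_hilbertFunction_le_one
    (hilbertFunction_span_pair_one_le (huh i) (huh j) hij) hle hJ
    (homogeneousComponent_isHomogeneous n t)
    (homogeneousComponent_mem_bourbakiIdeal hφ huh (Nat.one_le_iff_ne_zero.2 he) ht n)

end LinearForms

/-! ### Nearly free syzygy modules -/

section NearlyFree

open scoped Matrix

section Resolution

variable {A : Type*} [CommRing A] {φ u : Fin 3 → A}

lemma smul_cross_sub_smul_cross (hu : u ⬝ᵥ φ = 0) (a b : Fin 3 → A) :
    (u ⬝ᵥ b) • φ ⨯₃ a - (u ⬝ᵥ a) • φ ⨯₃ b = (φ ⬝ᵥ a ⨯₃ b) • u := by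
  rw [← cross_cross_eq_smul_of_dotProduct_eq_zero ((dotProduct_comm φ u).trans hu) (a ⨯₃ b),
    cross_cross_eq_smul_sub_smul' u, map_sub, map_smul, map_smul, dotProduct_comm a]

lemma cross_smul_add_smul_cross_add_smul_cross (hu : u ⬝ᵥ φ = 0) (a b : Fin 3 → A) (s α β : A) :
    u ⨯₃ (s • u + α • φ ⨯₃ a + β • φ ⨯₃ b) = (α * (u ⬝ᵥ a) + β * (u ⬝ᵥ b)) • φ := by
  simp only [map_add, map_smul, cross_self, cross_cross_eq_smul_of_dotProduct_eq_zero hu, smul_zero,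
    zero_add, smul_smul, add_smul]

variable [IsDomain A] [UniqueFactorizationMonoid A]

lemma dotProduct_eq_zero_iff_of_bourbakiIdeal_eq_span_pair (hφp : IsPrimitiveVector φ)
    (hup : IsPrimitiveVector u) (hu : u ⬝ᵥ φ = 0) {a b : Fin 3 → A}
    (hJ : bourbakiIdeal φ u = Ideal.span {u ⬝ᵥ a, u ⬝ᵥ b}) (w : Fin 3 → A) :
    w ⬝ᵥ φ = 0 ↔ ∃ s α β : A, s • u + α • φ ⨯₃ a + β • φ ⨯₃ b = w := by
  constructor
  · intro hw
    obtain ⟨t, ht⟩ := hφp.exists_cross_eq_smul hu hw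
    have htJ : t ∈ bourbakiIdeal φ u := ⟨w, ht⟩
    obtain ⟨α, β, rfl⟩ := Ideal.mem_span_pair.1 (hJ ▸ htJ)
    have hcross : u ⨯₃ (w - ((0 : A) • u + α • φ ⨯₃ a + β • φ ⨯₃ b)) = 0 := by
      rw [map_sub, ht, cross_smul_add_smul_cross_add_smul_cross hu, sub_self]
    obtain ⟨s, hs⟩ := hup.exists_eq_smul_of_cross_eq_zero hcross
    rw [zero_smul, zero_add, sub_eq_iff_eq_add, ← add_assoc] at hs
    exact ⟨s, α, β, hs.symm⟩
  · rintro ⟨s, α, β, rfl⟩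
    simp only [add_dotProduct, smul_dotProduct, hu, dotProduct_comm (φ ⨯₃ _), dot_self_cross,
      smul_zero, add_zero]

lemma smul_add_smul_cross_add_smul_cross_eq_zero_iff (hφ0 : φ ≠ 0) (hu0 : u ≠ 0)
    (hu : u ⬝ᵥ φ = 0) {a b : Fin 3 → A} (ha0 : u ⬝ᵥ a ≠ 0) (hab : IsRelPrime (u ⬝ᵥ a) (u ⬝ᵥ b))
    (s α β : A) : s • u + α • φ ⨯₃ a + β • φ ⨯₃ b = 0 ↔
      ∃ t : A, s = t * (φ ⬝ᵥ a ⨯₃ b) ∧ α = -(t * (u ⬝ᵥ b)) ∧ β = t * (u ⬝ᵥ a) := by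
  have hcomb (s t : A) :
      s • u + -(t * (u ⬝ᵥ b)) • φ ⨯₃ a + (t * (u ⬝ᵥ a)) • φ ⨯₃ b =
        (s - t * (φ ⬝ᵥ a ⨯₃ b)) • u :=
    calc _ = s • u - t • ((u ⬝ᵥ b) • φ ⨯₃ a - (u ⬝ᵥ a) • φ ⨯₃ b) := by module
      _ = _ := by rw [smul_cross_sub_smul_cross hu, sub_smul, mul_smul]
  constructor
  · intro h
    have hcross := cross_smul_add_smul_cross_add_smul_cross hu a b s α β
    rw [h, map_zero, eq_comm, smul_eq_zero] at hcross
    obtain ⟨t, rfl, rfl⟩ := exists_eq_mul_of_isRelPrime ha0 hab (hcross.resolve_right hφ0)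
    rw [hcomb, smul_eq_zero] at h
    exact ⟨t, sub_eq_zero.1 (h.resolve_right hu0), rfl, rfl⟩
  · rintro ⟨t, rfl, rfl, rfl⟩
    rw [hcomb, sub_self, zero_smul]

lemma isSyzygyResolution_of_bourbakiIdeal_eq_span_pair (hφp : IsPrimitiveVector φ)
    (hup : IsPrimitiveVector u) (hu : u ⬝ᵥ φ = 0) {a b : Fin 3 → A} (ha0 : u ⬝ᵥ a ≠ 0)
    (hab : IsRelPrime (u ⬝ᵥ a) (u ⬝ᵥ b))
    (hJ : bourbakiIdeal φ u = Ideal.span {u ⬝ᵥ a, u ⬝ᵥ b}) :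
    IsSyzygyResolution φ ![u, φ ⨯₃ a, φ ⨯₃ b] ![φ ⬝ᵥ a ⨯₃ b, -(u ⬝ᵥ b), u ⬝ᵥ a] where
  generates w := by
    rw [dotProduct_eq_zero_iff_of_bourbakiIdeal_eq_span_pair hφp hup hu hJ]
    simp only [Fin.exists_fin_succ_pi, Fin.exists_fin_zero_pi, Fin.sum_univ_three]
    rfl
  relations c := by
    simp only [Fin.sum_univ_three, Matrix.cons_val,
      smul_add_smul_cross_add_smul_cross_eq_zero_iff hφp.ne_zero hup.ne_zero hu ha0 hab]
    simp [funext_iff, Fin.forall_fin_succ, eq_comm]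
  ne_zero h := ha0 (congrFun h 2)

lemma isSyzygyResolution_iff {A : Type*} [CommRing A] {φ r u v₁ v₂ : Fin 3 → A} :
    IsSyzygyResolution φ ![u, v₁, v₂] r ↔
      (∀ w : Fin 3 → A, ∑ i, w i * φ i = 0 ↔ w ∈ Submodule.span A {u, v₁, v₂}) ∧
        r ≠ 0 ∧ ∀ a : Fin 3 → A,
          a 0 • u + a 1 • v₁ + a 2 • v₂ = 0 ↔ a ∈ Submodule.span A {r} := by
  have hspan (w : Fin 3 → A) : w ∈ Submodule.span A {u, v₁, v₂} ↔
      ∃ c : Fin 3 → A, ∑ j, c j • ![u, v₁, v₂] j = w := by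
    simp only [Submodule.mem_span_triple, Fin.exists_fin_succ_pi, Fin.exists_fin_zero_pi,
      Fin.sum_univ_three]
    rfl
  have hsum (a : Fin 3 → A) :
      ∑ j, a j • ![u, v₁, v₂] j = a 0 • u + a 1 • v₁ + a 2 • v₂ := Fin.sum_univ_three _
  simp only [hspan, Submodule.mem_span_singleton, ← hsum]
  exact ⟨fun h => ⟨h.generates, h.ne_zero, h.relations⟩, fun h => ⟨h.1, h.2.2, h.2.1⟩⟩

end Resolution

variable {k : Type*} [Field k] {φ : Fin 3 → MvPolynomial (Fin 3) k} {e : ℕ}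

/-- The sheaf of relations of `φ` is nearly free of exponents `(d₁, d₂)`: there is a graded
resolution `0 → R(-d₂ - 1) → R(-d₁) ⊕ R(-d₂)² → N → 0` of the syzygy module `N` of `φ`. -/
def IsNearlyFree (φ : Fin 3 → MvPolynomial (Fin 3) k) (d₁ d₂ : ℕ) : Prop :=
  ∃ (v : Fin 3 → Fin 3 → MvPolynomial (Fin 3) k) (r : Fin 3 → MvPolynomial (Fin 3) k),
    (∀ j i, (v j i).IsHomogeneous (![d₁, d₂, d₂] j)) ∧
    (∀ j, (r j).IsHomogeneous (d₂ + 1 - ![d₁, d₂, d₂] j)) ∧ IsSyzygyResolution φ v r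

lemma isNearlyFree_iff {d : ℕ} :
    IsNearlyFree φ 1 d ↔ ∃ u v₁ v₂ : Fin 3 → MvPolynomial (Fin 3) k,
        (∑ i, u i * φ i = 0) ∧ (∑ i, v₁ i * φ i = 0) ∧ (∑ i, v₂ i * φ i = 0) ∧
        (∀ i, (u i).IsHomogeneous 1) ∧
        (∀ i, (v₁ i).IsHomogeneous d) ∧ (∀ i, (v₂ i).IsHomogeneous d) ∧
        (∀ w : Fin 3 → MvPolynomial (Fin 3) k,
          (∑ i, w i * φ i = 0) ↔
            w ∈ Submodule.span (MvPolynomial (Fin 3) k) {u, v₁, v₂}) ∧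
        ∃ r : Fin 3 → MvPolynomial (Fin 3) k,
          r ≠ 0 ∧
          (r 0).IsHomogeneous d ∧
          (r 1).IsHomogeneous 1 ∧ (r 2).IsHomogeneous 1 ∧
          (∀ a : Fin 3 → MvPolynomial (Fin 3) k,
            (a 0 • u + a 1 • v₁ + a 2 • v₂ = 0) ↔
              a ∈ Submodule.span (MvPolynomial (Fin 3) k) {r}) := by
  constructor
  · rintro ⟨v, r, hv, hr, hres⟩
    have hv' : v = ![v 0, v 1, v 2] := by
      ext i : 1
      fin_cases i <;> rfl
    have hsyz (j : Fin 3) : v j ⬝ᵥ φ = 0 :=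
      (hres.generates _).2 ⟨Pi.single j 1, by simp [Pi.single_apply]⟩
    have hr' {j : Fin 3} (hj : d + 1 - ![1, d, d] j = 1) : (r j).IsHomogeneous 1 := hj ▸ hr j
    obtain ⟨hgen, hr0, hrel⟩ := isSyzygyResolution_iff.1 (hv' ▸ hres)
    exact ⟨v 0, v 1, v 2, hsyz 0, hsyz 1, hsyz 2, hv 0, hv 1, hv 2, hgen, r, hr0, hr 0,
      hr' (Nat.add_sub_cancel_left d 1), hr' (Nat.add_sub_cancel_left d 1), hrel⟩
  · rintro ⟨u, v₁, v₂, -, -, -, hu, hv₁, hv₂, hgen, r, hr0, hr₀, hr₁, hr₂, hrel⟩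
    have hdeg : d + 1 - d = 1 := Nat.add_sub_cancel_left d 1
    refine ⟨![u, v₁, v₂], r, ?_, ?_, isSyzygyResolution_iff.2 ⟨hgen, hr0, hrel⟩⟩
    · exact Fin.forall_fin_succ.2 ⟨hu, Fin.forall_fin_two.2 ⟨hv₁, hv₂⟩⟩
    · exact Fin.forall_fin_succ.2 ⟨hr₀, Fin.forall_fin_two.2
        ⟨show (r 1).IsHomogeneous (d + 1 - d) from hdeg.symm ▸ hr₁,
          show (r 2).IsHomogeneous (d + 1 - d) from hdeg.symm ▸ hr₂⟩⟩

lemma isNearlyFree_of_eventually_hilbertFunction (he : 5 ≤ e) (hφ : ∀ i, (φ i).IsHomogeneous e)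
    (hφp : IsPrimitiveVector φ)
    (hI : ∀ᶠ m in atTop, hilbertFunction (Ideal.span (Set.range φ)) m + e = e ^ 2) :
    IsNearlyFree φ 1 e := by
  obtain ⟨r, hre, u, hu, hup, hmin⟩ :=
    exists_isPrimitiveVector_mem_gradedSyzygies (gradedSyzygies_ne_bot hφ hφp.ne_zero)
  obtain rfl := eq_one_of_eventually_hilbertFunction he hφ hφp hup hu hmin hre hI
  obtain ⟨huh, huφ⟩ := mem_gradedSyzygies.1 hu
  obtain ⟨i, j, hi, hij⟩ := hup.exists_isRelPrime huh
  have hJ : ∀ᶠ n in atTop, hilbertFunction (bourbakiIdeal φ u) n ≠ 0 :=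
    (eventually_hilbertFunction_bourbakiIdeal hφ hφp hup hu hI).mono fun n hn => by omega
  have hspan := bourbakiIdeal_eq_span_pair hφ (by omega) hu hij hJ.frequently
  rw [← dotProduct_single_one u i] at hi hij hspan
  rw [← dotProduct_single_one u j] at hij hspan
  have hsyz (l : Fin 3) := (mem_gradedSyzygies.1 (cross_single_mem_gradedSyzygies hφ l)).1
  refine ⟨_, _, ?_, ?_, isSyzygyResolution_of_bourbakiIdeal_eq_span_pair hφp hup huφ hi hij hspan⟩
  · exact Fin.forall_fin_succ.2 ⟨huh, Fin.forall_fin_two.2 ⟨hsyz i, hsyz j⟩⟩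
  · have htriple : (φ ⬝ᵥ Pi.single i 1 ⨯₃ Pi.single j 1).IsHomogeneous e :=
      isHomogeneous_dotProduct (b := fun _ => 0)
        (isHomogeneous_cross (isHomogeneous_single_one i) (isHomogeneous_single_one j))
        (fun _ => e.zero_le) hφ
    have hentry {l : Fin 3} {f : MvPolynomial (Fin 3) k} (hf : f = u l) :
        f.IsHomogeneous (e + 1 - e) := by
      rw [hf, Nat.add_sub_cancel_left]
      exact huh l
    exact Fin.forall_fin_succ.2 ⟨htriple, Fin.forall_fin_two.2
      ⟨(hentry (dotProduct_single_one u j)).neg, hentry (dotProduct_single_one u i)⟩⟩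

lemma IsNearlyFree.finrank_gradedSyzygies (h : IsNearlyFree φ 1 e) (n : ℕ) :
    Module.finrank k (gradedSyzygies φ (n + e + 1)) +
        Module.finrank k (homogeneousSubmodule (Fin 3) k n) =
      Module.finrank k (homogeneousSubmodule (Fin 3) k (n + e)) +
        2 * Module.finrank k (homogeneousSubmodule (Fin 3) k (n + 1)) := by
  obtain ⟨v, r, hv, hr, hres⟩ := h
  have hle : ∀ j, ![1, e, e] j ≤ e + 1 :=
    Fin.forall_fin_succ.2 ⟨Nat.le_add_left 1 e, Fin.forall_fin_two.2 ⟨e.le_succ, e.le_succ⟩⟩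
  have hsyz := hres.finrank_gradedSyzygies (m := n + e + 1) hv hr hle (by omega)
  rw [Fin.sum_univ_three, show n + e + 1 - (e + 1) = n by omega,
    show n + e + 1 - ![1, e, e] 0 = n + e from rfl,
    show n + e + 1 - ![1, e, e] 1 = n + 1 from (by omega : n + e + 1 - e = n + 1),
    show n + e + 1 - ![1, e, e] 2 = n + 1 from (by omega : n + e + 1 - e = n + 1)] at hsyz
  rw [hsyz, add_assoc, two_mul]

lemma IsNearlyFree.eventually_hilbertFunction (h : IsNearlyFree φ 1 e)
    (hφ : ∀ i, (φ i).IsHomogeneous e) :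
    ∀ᶠ m in atTop, hilbertFunction (Ideal.span (Set.range φ)) m + e = e ^ 2 := by
  filter_upwards [eventually_ge_atTop (2 * e + 1)] with m hm
  obtain ⟨n, rfl⟩ := Nat.exists_eq_add_of_le' hm
  rw [show n + (2 * e + 1) = n + e + 1 + e by ring]
  have hsyz := h.finrank_gradedSyzygies n
  have hI := hilbertFunction_span_range hφ (n + e + 1)
  rw [Fintype.card_fin] at hI
  have h₀ := two_mul_finrank_homogeneousSubmodule_fin_three (k := k) n
  have h₁ := two_mul_finrank_homogeneousSubmodule_fin_three (k := k) (n + 1)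
  have h₂ := two_mul_finrank_homogeneousSubmodule_fin_three (k := k) (n + e)
  have h₃ := two_mul_finrank_homogeneousSubmodule_fin_three (k := k) (n + e + 1)
  have h₄ := two_mul_finrank_homogeneousSubmodule_fin_three (k := k) (n + e + 1 + e)
  zify at *
  refine mul_left_cancel₀ (two_ne_zero' ℤ) ?_
  linear_combination 2 * hI + 2 * hsyz - h₀ + 2 * h₁ + h₂ - 3 * h₃ + h₄

lemma eventually_hilbertFunction_iff_isNearlyFree (he : 5 ≤ e) (hφ : ∀ i, (φ i).IsHomogeneous e)
    (hφp : IsPrimitiveVector φ) :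
    (∀ᶠ m in atTop, hilbertFunction (Ideal.span (Set.range φ)) m + e = e ^ 2) ↔
      IsNearlyFree φ 1 e :=
  ⟨isNearlyFree_of_eventually_hilbertFunction he hφ hφp, fun h => h.eventually_hilbertFunction hφ⟩

end NearlyFree

/-! ### Primitivity from the dimension of the quotient -/

section Dimension

section Height

variable {σ A : Type*} [CommRing A]

/-- The substitution of zero for the variables in `s`. The kernels of these substitutions, that is
the ideals generated by sets of variables, form chains of primes below the irrelevant ideal. -/
noncomputable def substZero (s : Set σ) : MvPolynomial σ A →ₐ[A] MvPolynomial σ A :=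
  aeval (sᶜ.indicator X)

lemma X_mem_ker_substZero [Nontrivial A] {s : Set σ} {i : σ} :
    X i ∈ RingHom.ker (substZero s : MvPolynomial σ A →ₐ[A] _) ↔ i ∈ s := by
  simp [substZero, RingHom.mem_ker]

instance [IsDomain A] (s : Set σ) :
    (RingHom.ker (substZero s : MvPolynomial σ A →ₐ[A] _)).IsPrime :=
  RingHom.ker_isPrime _

lemma substZero_comp_substZero (s t : Set σ) :
    (substZero t).comp (substZero s) = (substZero (t ∪ s) : MvPolynomial σ A →ₐ[A] _) := by
  ext i : 1
  by_cases hs : i ∈ s <;> by_cases ht : i ∈ t <;> simp [substZero, hs, ht]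

lemma substZero_univ (f : MvPolynomial σ A) : substZero Set.univ f = C (constantCoeff f) := by
  rw [substZero, Set.compl_univ, Set.indicator_empty', aeval_zero, algebraMap_eq]

lemma card_le_height_ker_substZero [IsDomain A] (s : Finset σ) :
    s.card ≤ (RingHom.ker (substZero s : MvPolynomial σ A →ₐ[A] _)).height := by
  induction s using Finset.cons_induction with
  | empty => exact zero_le
  | cons i s hi ih =>
    have hlt : RingHom.ker (substZero s : MvPolynomial σ A →ₐ[A] _) <
        RingHom.ker (substZero (s.cons i hi) : MvPolynomial σ A →ₐ[A] _) := by
      refine SetLike.lt_iff_le_and_exists.2 ⟨fun f hf => ?_, X i,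
        X_mem_ker_substZero.2 (Finset.mem_cons_self i s), mt X_mem_ker_substZero.1 hi⟩
      rw [RingHom.mem_ker, Finset.coe_cons, ← Set.singleton_union, ← substZero_comp_substZero,
        AlgHom.comp_apply, RingHom.mem_ker.1 hf, map_zero]
    rw [Finset.card_cons, Nat.cast_succ]
    exact (add_le_add_left ih 1).trans (Ideal.height_add_one_le_of_lt_of_isPrime hlt)

end Height

variable {k : Type*} [Field k] {σ ι : Type*} [Fintype σ]

lemma card_le_ringKrullDim_quotient_span_singleton_add_one {f : MvPolynomial σ k} {n : ℕ}
    (hf : f.IsHomogeneous n) (hn : n ≠ 0) :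
    (Fintype.card σ : WithBot ℕ∞) ≤ ringKrullDim (MvPolynomial σ k ⧸ Ideal.span {f}) + 1 := by
  have hker : f ∈ RingHom.ker (substZero (Finset.univ : Finset σ) : MvPolynomial σ k →ₐ[k] _) := by
    rw [RingHom.mem_ker, Finset.coe_univ, substZero_univ,
      constantCoeff_eq_zero_of_isHomogeneous hf hn, C_0]
  have hheight := card_le_height_ker_substZero (A := k) (Finset.univ : Finset σ)
  exact (WithBot.coe_le_coe.2 hheight).trans (Ideal.height_le_ringKrullDim_quotient_add_one hker)

lemma isPrimitiveVector_of_ringKrullDim_quotient_add_one_lt {φ : ι → MvPolynomial σ k} {e : ℕ}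
    (hφ : ∀ i, (φ i).IsHomogeneous e)
    (hdim : ringKrullDim (MvPolynomial σ k ⧸ Ideal.span (Set.range φ)) + 1 < Fintype.card σ) :
    IsPrimitiveVector φ := by
  intro p hp
  by_contra hunit
  obtain ⟨q, n, hn, hq, hdvd⟩ : ∃ (q : MvPolynomial σ k) (n : ℕ),
      n ≠ 0 ∧ q.IsHomogeneous n ∧ ∀ i, q ∣ φ i := by
    obtain rfl | hφ0 := eq_or_ne φ 0
    · exact ⟨0, 1, one_ne_zero, isHomogeneous_zero σ k 1, fun _ => dvd_rfl⟩
    obtain ⟨i, hi⟩ := Function.ne_iff.1 hφ0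
    obtain ⟨q, hq⟩ := hp i
    rw [Pi.zero_apply, hq] at hi
    obtain ⟨n, -, -, hpn, -⟩ := exists_isHomogeneous_of_mul (hq ▸ hφ i) hi
    refine ⟨p, n, ?_, hpn, hp⟩
    rintro rfl
    exact hunit (isUnit_of_isHomogeneous_zero hpn (left_ne_zero_of_mul hi))
  have hle : Ideal.span (Set.range φ) ≤ Ideal.span {q} :=
    Ideal.span_le.2 (Set.range_subset_iff.2 fun i => Ideal.mem_span_singleton.2 (hdvd i))
  have hsurj := ringKrullDim_le_of_surjective _ (Ideal.Quotient.factor_surjective hle)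
  have hcard := card_le_ringKrullDim_quotient_span_singleton_add_one hq hn
  exact absurd (hcard.trans (by gcongr)) hdim.not_ge

end Dimension

theorem stmt2_general (k : Type*) [Field k] (d : ℕ) (hd : 6 ≤ d)
    (φ : Fin 3 → MvPolynomial (Fin 3) k)
    (hφ : ∀ i, (φ i).IsHomogeneous (d - 1))
    (I : Ideal (MvPolynomial (Fin 3) k))
    (hI : I = Ideal.span (Set.range φ))
    (hdim : ringKrullDim (MvPolynomial (Fin 3) k ⧸ I) ≤ 1) :
    (∀ᶠ m in atTop,
        (Module.finrank k
            ((homogeneousSubmodule (Fin 3) k m).map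
              (Ideal.Quotient.mkₐ k I).toLinearMap) : ℤ)
          = ((d : ℤ) - 1) ^ 2 - ((d : ℤ) - 1))
    ↔ ∃ u v₁ v₂ : Fin 3 → MvPolynomial (Fin 3) k,
        (∑ i, u i * φ i = 0) ∧ (∑ i, v₁ i * φ i = 0) ∧ (∑ i, v₂ i * φ i = 0) ∧
        (∀ i, (u i).IsHomogeneous 1) ∧
        (∀ i, (v₁ i).IsHomogeneous (d - 1)) ∧ (∀ i, (v₂ i).IsHomogeneous (d - 1)) ∧
        (∀ w : Fin 3 → MvPolynomial (Fin 3) k,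
          (∑ i, w i * φ i = 0) ↔
            w ∈ Submodule.span (MvPolynomial (Fin 3) k) {u, v₁, v₂}) ∧
        ∃ r : Fin 3 → MvPolynomial (Fin 3) k,
          r ≠ 0 ∧
          (r 0).IsHomogeneous (d - 1) ∧
          (r 1).IsHomogeneous 1 ∧ (r 2).IsHomogeneous 1 ∧
          (∀ a : Fin 3 → MvPolynomial (Fin 3) k,
            (a 0 • u + a 1 • v₁ + a 2 • v₂ = 0) ↔
              a ∈ Submodule.span (MvPolynomial (Fin 3) k) {r}) := by
  subst hI
  have hdim' : ringKrullDim (MvPolynomial (Fin 3) k ⧸ Ideal.span (Set.range φ)) + 1 <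
      Fintype.card (Fin 3) := by
    calc _ ≤ (1 : WithBot ℕ∞) + 1 := by gcongr
      _ < _ := by rw [Fintype.card_fin]; norm_cast
  have hφp := isPrimitiveVector_of_ringKrullDim_quotient_add_one_lt hφ hdim'
  rw [← isNearlyFree_iff, ← eventually_hilbertFunction_iff_isNearlyFree (by omega) hφ hφp]
  refine eventually_congr (.of_forall fun m => ?_)
  rw [hilbertFunction, eq_sub_iff_add_eq, ← Nat.cast_pred (by omega)]
  norm_cast

/-- **Nearly-free criterion** (Theorem, part 2): with `I = (φ₀,φ₁,φ₂)` generated by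
three homogeneous polynomials of degree `d-1`, `d ≥ 6` (i.e. `-c₁(E) = d-1 ≥ 5`) and
`dim R/I ≤ 1`, the eventual Hilbert function of `R/I` equals `(d-1)² - (d-1)`
(i.e. `(d-1)² - τ(Z) = d-1`, the condition `-c₁(E) = c₂(E)`) if and only if the
sheaf of relations `E` is nearly free of exponents `(1, d-1)`: the syzygy module `N`
is generated by syzygies `u, v₁, v₂` of degrees `1, d-1, d-1` whose relation module
is generated by a single nonzero element of degrees `(d-1, 1, 1)`. -/
theorem stmt2 (k : Type*) [Field k] [IsAlgClosed k] (d : ℕ) (hd : 6 ≤ d)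
    (φ : Fin 3 → MvPolynomial (Fin 3) k)
    (hφ : ∀ i, (φ i).IsHomogeneous (d - 1))
    (I : Ideal (MvPolynomial (Fin 3) k))
    (hI : I = Ideal.span (Set.range φ))
    (hdim : ringKrullDim (MvPolynomial (Fin 3) k ⧸ I) ≤ 1) :
    (∀ᶠ m in atTop,
        (Module.finrank k
            ((homogeneousSubmodule (Fin 3) k m).map
              (Ideal.Quotient.mkₐ k I).toLinearMap) : ℤ)
          = ((d : ℤ) - 1) ^ 2 - ((d : ℤ) - 1))
    ↔ ∃ u v₁ v₂ : Fin 3 → MvPolynomial (Fin 3) k,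
        (∑ i, u i * φ i = 0) ∧ (∑ i, v₁ i * φ i = 0) ∧ (∑ i, v₂ i * φ i = 0) ∧
        (∀ i, (u i).IsHomogeneous 1) ∧
        (∀ i, (v₁ i).IsHomogeneous (d - 1)) ∧ (∀ i, (v₂ i).IsHomogeneous (d - 1)) ∧
        (∀ w : Fin 3 → MvPolynomial (Fin 3) k,
          (∑ i, w i * φ i = 0) ↔
            w ∈ Submodule.span (MvPolynomial (Fin 3) k) {u, v₁, v₂}) ∧
        ∃ r : Fin 3 → MvPolynomial (Fin 3) k,
          r ≠ 0 ∧
          (r 0).IsHomogeneous (d - 1) ∧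
          (r 1).IsHomogeneous 1 ∧ (r 2).IsHomogeneous 1 ∧
          (∀ a : Fin 3 → MvPolynomial (Fin 3) k,
            (a 0 • u + a 1 • v₁ + a 2 • v₂ = 0) ↔
              a ∈ Submodule.span (MvPolynomial (Fin 3) k) {r}) :=
  stmt2_general k d hd φ hφ I hI hdim
end
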